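/- arXiv:2207.02669 — 2 statements merged into one kernel-verified Lean document; each statement's English description precedes it below -/
import Mathlib

section
/- Every finite graph G admits an orientation of its edges in which every vertex has out-degree at most ⌈∇₀(G)⌉; in particular, a planar graph admits an orientation with maximum out-degree at most 3. -/
/-- A drawing of a simple graph in the plane: vertices are mapped to distinct
points, each edge is realized by a simple arc (homeomorphic image of `[0,1]`)
between the images of its endpoints, the interior of an arc avoids all vertex
images, and arcs of distinct edges meet only in common endpoints. -/
structure PlanarEmbedding {V : Type*} (G : SimpleGraph V) where
  vtx : V → ℝ × ℝ
  vtx_inj : Function.Injective vtx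
  arc : ∀ u v, G.Adj u v → Set (ℝ × ℝ)
  arc_symm : ∀ u v (h : G.Adj u v), arc u v h = arc v u h.symm
  arc_curve : ∀ u v (h : G.Adj u v), ∃ φ : Set.Icc (0:ℝ) 1 → ℝ × ℝ,
      Continuous φ ∧ Function.Injective φ ∧
      φ ⟨0, Set.mem_Icc.mpr (by norm_num)⟩ = vtx u ∧
      φ ⟨1, Set.mem_Icc.mpr (by norm_num)⟩ = vtx v ∧
      Set.range φ = arc u v h
  arc_vtx : ∀ u v (h : G.Adj u v) (w : V), vtx w ∈ arc u v h → w = u ∨ w = v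
  arc_disjoint : ∀ u v (h : G.Adj u v) u' v' (h' : G.Adj u' v'),
      s(u, v) ≠ s(u', v') →
      arc u v h ∩ arc u' v' h' ⊆
        ({vtx u, vtx v} : Set (ℝ × ℝ)) ∩ ({vtx u', vtx v'} : Set (ℝ × ℝ))

/-- A graph is planar if it admits a plane drawing. -/
def SimpleGraph.IsPlanar {V : Type*} (G : SimpleGraph V) : Prop :=
  Nonempty (PlanarEmbedding G)

/-- Twice the number of edges of the subgraph of `G` induced on `s`. -/
def pairCount {V : Type*} [Fintype V] [DecidableEq V] (G : SimpleGraph V)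
    [DecidableRel G.Adj] (s : Finset V) : ℕ :=
  (Finset.univ.filter fun p : V × V => p.1 ∈ s ∧ p.2 ∈ s ∧ G.Adj p.1 p.2).card

theorem aux_lift {A : Type*} [TopologicalSpace A] [SimplyConnectedSpace A]
    [LocallyPathConnectedSpace A] (a₀ : A) (f : A → ℂ) (hf : Continuous f) (h0 : ∀ a, f a ≠ 0) :
    ∃ L : A → ℂ, Continuous L ∧ ∀ a, Complex.exp (L a) = f a := by
  have cov := Complex.isCoveringMapOn_exp
  obtain ⟨F, ⟨-, hF⟩, -⟩ := cov.existsUnique_continuousMap_lifts (A := A) ⟨f, hf⟩ (a₀ := a₀)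
    (e₀ := Complex.log (f a₀)) (by simpa using Complex.exp_log (h0 a₀)) (by simpa using h0)
  exact ⟨F, F.continuous, fun a => congrFun hF a⟩

theorem aux_uniq (L M : ℝ → ℂ) (hL : Continuous L) (hM : Continuous M) (c : ℂ)
    (h : ∀ t, Complex.exp (L t) = c * Complex.exp (M t)) : L 1 - L 0 = M 1 - M 0 := by
  have hc : c ≠ 0 := by
    intro hc
    have := h 0
    simp [hc] at this
  have h2 : ∀ t, ∃ n : ℤ, L t - M t = Complex.log c + n * (2 * Real.pi * Complex.I) := by
    intro t
    rw [← Complex.exp_eq_exp_iff_exists_int, Complex.exp_sub, h t, Complex.exp_log hc]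
    field_simp [Complex.exp_ne_zero]
  choose n hn using h2
  have hpi : (2 * Real.pi * Complex.I : ℂ) ≠ 0 := Complex.two_pi_I_ne_zero
  have h3 : ∀ t, (n t : ℝ) = ((L t - M t - Complex.log c) / (2 * Real.pi * Complex.I)).re := by
    intro t
    rw [hn t]
    have : (Complex.log c + n t * (2 * Real.pi * Complex.I) - Complex.log c) / (2 * Real.pi * Complex.I)
        = ((n t : ℝ) : ℂ) := by
      field_simp
      push_cast
      ring
    rw [this, Complex.ofReal_re]
  have h4 : Continuous (fun t => (n t : ℝ)) := by
    rw [funext h3]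
    fun_prop
  have h5 : Continuous n := Int.isClosedEmbedding_coe_real.isEmbedding.continuous_iff.mpr h4
  have h6 : n 1 = n 0 := PreconnectedSpace.constant inferInstance h5
  have := hn 1
  rw [h6, ← hn 0] at this
  linear_combination this

theorem aux_K5 (p : Fin 5 → ℂ) (K : Fin 5 → Fin 5 → Set ℂ)
    (hp : Function.Injective p)
    (hJ : ∀ i j, i ≠ j → JoinedIn (K i j) (p i) (p j))
    (hv : ∀ i j w, i ≠ j → w ≠ i → w ≠ j → p w ∉ K i j)
    (hd : ∀ i j k l, i ≠ j → k ≠ l → i ≠ k → i ≠ l → j ≠ k → j ≠ l →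
      Disjoint (K i j) (K k l)) : False := by
  have h1 : ∀ i j, i ≠ j → ∃ g : ℝ → ℂ, Continuous g ∧ g 0 = p i ∧ g 1 = p j ∧ ∀ t, g t ∈ K i j := by
    intro i j hij
    obtain ⟨γ, hγ⟩ := hJ i j hij
    exact ⟨γ.extend, γ.continuous_extend, by simp, by simp, fun t => hγ _⟩
  choose! g gc g0 g1 gK using h1
  have h2 : ∀ w i j, i ≠ j → w ≠ i → w ≠ j → ∃ L : ℝ → ℂ, Continuous L ∧
      ∀ t, Complex.exp (L t) = g i j t - p w := by
    intro w i j hij hi hj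
    refine aux_lift 0 _ ((gc i j hij).sub continuous_const) fun t h => hv i j w hij hi hj ?_
    rw [← sub_eq_zero.mp h]
    exact gK i j hij t
  choose! L Lc hL using h2
  -- logs of differences
  let Λ : Fin 5 → Fin 5 → ℂ := fun i j =>
    if i < j then Complex.log (p j - p i) else Complex.log (p i - p j) + Real.pi * Complex.I
  have hΛ : ∀ i j, i ≠ j → Complex.exp (Λ i j) = p j - p i := by
    intro i j hij
    have e1 : p j - p i ≠ 0 := sub_ne_zero.mpr (hp.ne hij.symm)
    have e2 : p i - p j ≠ 0 := sub_ne_zero.mpr (hp.ne hij)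
    simp only [Λ]
    split_ifs
    · exact Complex.exp_log e1
    · rw [Complex.exp_add, Complex.exp_log e2, Complex.exp_pi_mul_I]; ring
  have hΛ2 : ∀ i j, i < j → Λ j i = Λ i j + Real.pi * Complex.I := by
    intro i j hij
    simp [Λ, hij, hij.not_gt]
  have h3 : ∀ w i j, i ≠ j → w ≠ i → w ≠ j → ∃ n : ℤ,
      L w i j 1 - L w i j 0 = Λ w j - Λ w i + n * (2 * Real.pi * Complex.I) := by
    intro w i j hij hi hj
    rw [← Complex.exp_eq_exp_iff_exists_int, Complex.exp_sub, Complex.exp_sub, hL w i j hij hi hj,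
      hL w i j hij hi hj, hΛ w j hj, hΛ w i hi, g0 i j hij, g1 i j hij]
  choose! n hn using h3
  have cell : ∀ i j k l, i ≠ j → k ≠ l → i ≠ k → i ≠ l → j ≠ k → j ≠ l →
      (L k i j 1 - L k i j 0) + (L j k l 1 - L j k l 0) - (L l i j 1 - L l i j 0)
        - (L i k l 1 - L i k l 0) = 0 := by
    intro i j k l hij hkl hik hil hjk hjl
    obtain ⟨M, Mc, hM⟩ := aux_lift ((0, 0) : ℝ × ℝ) (fun x => g i j x.1 - g k l x.2)
      (((gc i j hij).comp continuous_fst).sub ((gc k l hkl).comp continuous_snd))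
      (fun x h => Set.disjoint_left.mp (hd i j k l hij hkl hik hil hjk hjl) (gK i j hij x.1)
        (by rw [sub_eq_zero.mp h]; exact gK k l hkl x.2))
    have a1 := aux_uniq (L k i j) (fun t => M (t, 0)) (Lc _ _ _ hij hik.symm hjk.symm)
      (by fun_prop) 1 (by intro t; rw [hL _ _ _ hij hik.symm hjk.symm, hM]; simp [g0 k l hkl])
    have a2 := aux_uniq (L l i j) (fun t => M (t, 1)) (Lc _ _ _ hij hil.symm hjl.symm)
      (by fun_prop) 1 (by intro t; rw [hL _ _ _ hij hil.symm hjl.symm, hM]; simp [g1 k l hkl])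
    have a3 := aux_uniq (L i k l) (fun t => M (0, t)) (Lc _ _ _ hkl hik hil)
      (by fun_prop) (-1) (by intro t; rw [hL _ _ _ hkl hik hil, hM]; simp [g0 i j hij])
    have a4 := aux_uniq (L j k l) (fun t => M (1, t)) (Lc _ _ _ hkl hjk hjl)
      (by fun_prop) (-1) (by intro t; rw [hL _ _ _ hkl hjk hjl, hM]; simp [g1 i j hij])
    rw [a1, a2, a3, a4]
    ring
  let σ : Fin 5 → Fin 5 → ℤ := fun a b => if a < b then -1 else 1
  have hσ : ∀ a b, a ≠ b → Λ a b - Λ b a = σ a b * (Real.pi * Complex.I) := by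
    intro a b hab
    rcases lt_or_gt_of_ne hab with h | h
    · rw [hΛ2 a b h]; simp [σ, h]
    · rw [hΛ2 b a h]; simp [σ, h.not_gt]
  have key : ∀ i j k l, i ≠ j → k ≠ l → i ≠ k → i ≠ l → j ≠ k → j ≠ l →
      2 * (n k i j + n j k l - n l i j - n i k l) + (σ k j + σ j l + σ l i + σ i k) = 0 := by
    intro i j k l hij hkl hik hil hjk hjl
    have c := cell i j k l hij hkl hik hil hjk hjl
    rw [hn _ _ _ hij hik.symm hjk.symm, hn _ _ _ hij hil.symm hjl.symm, hn _ _ _ hkl hik hil,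
      hn _ _ _ hkl hjk hjl] at c
    have hpi : (Real.pi * Complex.I : ℂ) ≠ 0 := by simp [Real.pi_ne_zero]
    have : ((2 * (n k i j + n j k l - n l i j - n i k l) + (σ k j + σ j l + σ l i + σ i k) : ℤ) : ℂ)
        * (Real.pi * Complex.I) = 0 := by
      push_cast
      linear_combination c - hσ k j hjk.symm - hσ j l hjl - hσ l i hil.symm - hσ i k hik
    exact_mod_cast (mul_eq_zero.mp this).resolve_right hpi
  clear_value Λ
  have q1 := key 0 1 2 3 (by decide) (by decide) (by decide) (by decide) (by decide) (by decide)
  have q2 := key 0 1 2 4 (by decide) (by decide) (by decide) (by decide) (by decide) (by decide)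
  have q3 := key 0 1 3 4 (by decide) (by decide) (by decide) (by decide) (by decide) (by decide)
  have q4 := key 0 2 1 3 (by decide) (by decide) (by decide) (by decide) (by decide) (by decide)
  have q5 := key 0 2 1 4 (by decide) (by decide) (by decide) (by decide) (by decide) (by decide)
  have q6 := key 0 2 3 4 (by decide) (by decide) (by decide) (by decide) (by decide) (by decide)
  have q7 := key 0 3 1 2 (by decide) (by decide) (by decide) (by decide) (by decide) (by decide)
  have q8 := key 0 3 1 4 (by decide) (by decide) (by decide) (by decide) (by decide) (by decide)
  have q9 := key 0 3 2 4 (by decide) (by decide) (by decide) (by decide) (by decide) (by decide)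
  have q10 := key 0 4 1 2 (by decide) (by decide) (by decide) (by decide) (by decide) (by decide)
  have q11 := key 0 4 1 3 (by decide) (by decide) (by decide) (by decide) (by decide) (by decide)
  have q12 := key 0 4 2 3 (by decide) (by decide) (by decide) (by decide) (by decide) (by decide)
  have q13 := key 1 2 3 4 (by decide) (by decide) (by decide) (by decide) (by decide) (by decide)
  have q14 := key 1 3 2 4 (by decide) (by decide) (by decide) (by decide) (by decide) (by decide)
  have q15 := key 1 4 2 3 (by decide) (by decide) (by decide) (by decide) (by decide) (by decide)
  simp only [σ, Fin.reduceLT, if_true, if_false] at q1 q2 q3 q4 q5 q6 q7 q8 q9 q10 q11 q12 q13 q14 q15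
  clear key hσ hΛ2 hΛ hn cell hL
  omega

/-- Drawings in which independent edges are disjoint. -/
def AuxDrw {V : Type} (H : SimpleGraph V) : Prop :=
  ∃ (p : V → ℂ) (K : V → V → Set ℂ), Function.Injective p ∧
    (∀ i j, H.Adj i j → JoinedIn (K i j) (p i) (p j)) ∧
    (∀ i j w x, H.Adj i j → H.Adj w x → w ≠ i → w ≠ j → p w ∉ K i j) ∧
    (∀ i j k l, H.Adj i j → H.Adj k l → i ≠ k → i ≠ l → j ≠ k → j ≠ l →
      Disjoint (K i j) (K k l))

theorem AuxDrw.mono {V : Type} {H H' : SimpleGraph V} (h : AuxDrw H) (hl : H' ≤ H) :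
    AuxDrw H' := by
  obtain ⟨p, K, h1, h2, h3, h4⟩ := h
  exact ⟨p, K, h1, fun i j h => h2 i j (hl h), fun i j w x h h' => h3 i j w x (hl h) (hl h'),
    fun i j k l h h' => h4 i j k l (hl h) (hl h')⟩

/-- Contract the edge `uv` into `u`. -/
def auxContract {V : Type} (H : SimpleGraph V) (u v : V) : SimpleGraph V where
  Adj a b := a ≠ v ∧ b ≠ v ∧ a ≠ b ∧
    (H.Adj a b ∨ (a = u ∧ H.Adj v b) ∨ (b = u ∧ H.Adj v a))
  symm := ⟨by
    rintro a b ⟨h1, h2, h3, h4⟩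
    refine ⟨h2, h1, h3.symm, ?_⟩
    rcases h4 with h | h | h
    · exact Or.inl h.symm
    · exact Or.inr (Or.inr h)
    · exact Or.inr (Or.inl h)⟩
  loopless := ⟨fun a h => h.2.2.1 rfl⟩

theorem AuxDrw.contract {V : Type} {H : SimpleGraph V} (h : AuxDrw H) {u v : V}
    (huv : H.Adj u v) : AuxDrw (auxContract H u v) := by
  classical
  obtain ⟨p, K, h1, h2, h3, h4⟩ := h
  let K' : V → V → Set ℂ := fun a b =>
    if H.Adj a b then K a b else if a = u then K u v ∪ K v b else K a v ∪ K v u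
  have hK : ∀ a b, (auxContract H u v).Adj a b →
      (H.Adj a b ∧ K' a b = K a b) ∨ (a = u ∧ H.Adj v b ∧ K' a b = K u v ∪ K v b) ∨
      (b = u ∧ H.Adj a v ∧ K' a b = K a v ∪ K v u) := by
    rintro a b ⟨ha, hb, hab, h⟩
    by_cases hh : H.Adj a b
    · exact Or.inl ⟨hh, by simp [K', hh]⟩
    · rcases h with h | ⟨h, h'⟩ | ⟨h, h'⟩
      · exact absurd h hh
      · exact Or.inr (Or.inl ⟨h, h', by subst h; simp [K', hh]⟩)
      · have : a ≠ u := by rintro rfl; exact hab h.symm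
        exact Or.inr (Or.inr ⟨h, h'.symm, by simp [K', hh, this]⟩)
  refine ⟨p, K', h1, ?_, ?_, ?_⟩
  · intro a b hab
    rcases hK a b hab with ⟨h, e⟩ | ⟨rfl, h, e⟩ | ⟨rfl, h, e⟩
    · rw [e]; exact h2 a b h
    · rw [e]
      exact ((h2 _ _ huv).mono Set.subset_union_left).trans
        ((h2 _ _ h).mono Set.subset_union_right)
    · rw [e]
      exact ((h2 _ _ h).mono Set.subset_union_left).trans
        ((h2 _ _ huv.symm).mono Set.subset_union_right)
  · intro a b w x hab hwx hwa hwb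
    have hwv : w ≠ v := hwx.1
    obtain ⟨y, hy⟩ : ∃ y, H.Adj w y := by
      rcases hwx.2.2.2 with h | ⟨rfl, h⟩ | ⟨rfl, h⟩
      · exact ⟨_, h⟩
      · exact ⟨_, huv⟩
      · exact ⟨_, h.symm⟩
    rcases hK a b hab with ⟨h, e⟩ | ⟨rfl, h, e⟩ | ⟨rfl, h, e⟩
    · rw [e]; exact h3 a b w y h hy hwa hwb
    · rw [e, Set.mem_union, not_or]
      exact ⟨h3 _ _ w y huv hy hwa hwv, h3 _ _ w y h hy hwv hwb⟩
    · rw [e, Set.mem_union, not_or]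
      exact ⟨h3 _ _ w y h hy hwa hwv, h3 _ _ w y huv.symm hy hwv hwb⟩
  · intro a b c d hab hcd ac ad bc bd
    have hav : a ≠ v := hab.1
    have hbv : b ≠ v := hab.2.1
    have hcv : c ≠ v := hcd.1
    have hdv : d ≠ v := hcd.2.1
    have hvu := huv.symm
    rcases hK a b hab with ⟨h, e⟩ | ⟨rfl, h, e⟩ | ⟨rfl, h, e⟩ <;>
    rcases hK c d hcd with ⟨h', e'⟩ | ⟨hh, h', e'⟩ | ⟨hh, h', e'⟩ <;> rw [e, e'] <;>
    first
    | exact absurd hh.symm (by assumption)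
    | (try simp only [Set.disjoint_union_left, Set.disjoint_union_right]
       grind)

theorem auxDrw_K5 {V : Type} {H : SimpleGraph V} (h : AuxDrw H) (a b c d e : V)
    (hab : H.Adj a b) (hac : H.Adj a c) (had : H.Adj a d) (hae : H.Adj a e)
    (hbc : H.Adj b c) (hbd : H.Adj b d) (hbe : H.Adj b e)
    (hcd : H.Adj c d) (hce : H.Adj c e) (hde : H.Adj d e) : False := by
  obtain ⟨p, K, h1, h2, h3, h4⟩ := h
  let f : Fin 5 → V := ![a, b, c, d, e]
  have hf : ∀ i j, i ≠ j → H.Adj (f i) (f j) := by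
    intro i j hij
    fin_cases i <;> fin_cases j <;> first | exact absurd rfl hij | assumption | (apply SimpleGraph.Adj.symm; assumption)
  have hfn : ∀ i j, i ≠ j → f i ≠ f j := fun i j hij => (hf i j hij).ne
  exact aux_K5 (p ∘ f) (fun i j => K (f i) (f j))
    (h1.comp fun i j hij => by by_contra hh; exact hfn i j hh hij)
    (fun i j hij => h2 _ _ (hf i j hij))
    (fun i j w hij hi hj => h3 _ _ _ _ (hf i j hij) (hf w i hi) (hfn _ _ hi) (hfn _ _ hj))
    (fun i j k l hij hkl a1 a2 a3 a4 => h4 _ _ _ _ (hf i j hij) (hf k l hkl)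
      (hfn _ _ a1) (hfn _ _ a2) (hfn _ _ a3) (hfn _ _ a4))

open scoped Classical in
theorem aux_local {V : Type} [Fintype V] {H : SimpleGraph V} (h : AuxDrw H) (v : V)
    (h5 : H.degree v ≤ 5) (h0 : 0 < H.degree v)
    (ht : ∀ u, H.Adj u v → 3 ≤ (H.neighborFinset v ∩ H.neighborFinset u).card) : False := by
  set N := H.neighborFinset v with hN
  have hNc : N.card = H.degree v := rfl
  have hm : ∀ x, x ∈ N ↔ H.Adj v x := fun x => by simp [hN]
  have h4 : 4 ≤ N.card := by
    obtain ⟨u, hu⟩ := Finset.card_pos.mp (hNc ▸ h0)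
    have h1 := ht u ((hm u).mp hu).symm
    have h2 : N ∩ H.neighborFinset u ⊆ N.erase u := by
      intro x hx
      simp only [Finset.mem_inter, SimpleGraph.mem_neighborFinset] at hx
      exact Finset.mem_erase.mpr ⟨hx.2.ne', hx.1⟩
    have h3 := Finset.card_le_card h2
    rw [Finset.card_erase_of_mem hu] at h3
    omega
  have P : ∀ u ∈ N, ∀ w ∈ N, ∀ w' ∈ N, u ≠ w → u ≠ w' → w ≠ w' → ¬ H.Adj u w → H.Adj u w' := by
    intro u hu w hw w' hw' a1 a2 a3 hn
    by_contra hn'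
    have h1 := ht u ((hm u).mp hu).symm
    have h2 : N ∩ H.neighborFinset u ⊆ ((N.erase u).erase w).erase w' := by
      intro x hx
      simp only [Finset.mem_inter, SimpleGraph.mem_neighborFinset] at hx
      simp only [Finset.mem_erase]
      refine ⟨?_, ?_, hx.2.ne', hx.1⟩
      · rintro rfl; exact hn' hx.2
      · rintro rfl; exact hn hx.2
    have h3 := Finset.card_le_card h2
    rw [Finset.card_erase_of_mem (by grind), Finset.card_erase_of_mem (by grind),
      Finset.card_erase_of_mem hu] at h3
    omega
  by_cases hall : ∀ x ∈ N, ∀ y ∈ N, x ≠ y → H.Adj x y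
  · obtain ⟨a, ha⟩ : N.Nonempty := Finset.card_pos.mp (by omega)
    have : 2 < (N.erase a).card := by rw [Finset.card_erase_of_mem ha]; omega
    obtain ⟨b, hb, c, hc, d, hd, hbc, hbd, hcd⟩ := Finset.two_lt_card.mp this
    rw [Finset.mem_erase] at hb hc hd
    exact auxDrw_K5 h v a b c d ((hm _).mp ha) ((hm _).mp hb.2) ((hm _).mp hc.2) ((hm _).mp hd.2)
      (hall _ ha _ hb.2 hb.1.symm) (hall _ ha _ hc.2 hc.1.symm) (hall _ ha _ hd.2 hd.1.symm)
      (hall _ hb.2 _ hc.2 hbc) (hall _ hb.2 _ hd.2 hbd) (hall _ hc.2 _ hd.2 hcd)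
  · push Not at hall
    obtain ⟨x, hx, y, hy, hxy, hnxy⟩ := hall
    have h5' : N.card = 5 := by
      have h1 := ht x ((hm x).mp hx).symm
      have h2 : N ∩ H.neighborFinset x ⊆ (N.erase x).erase y := by
        intro z hz
        simp only [Finset.mem_inter, SimpleGraph.mem_neighborFinset] at hz
        simp only [Finset.mem_erase]
        refine ⟨?_, hz.2.ne', hz.1⟩
        rintro rfl; exact hnxy hz.2
      have h3 := Finset.card_le_card h2
      rw [Finset.card_erase_of_mem (by grind), Finset.card_erase_of_mem hx] at h3
      omega
    have : 2 < ((N.erase x).erase y).card := by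
      rw [Finset.card_erase_of_mem (by grind), Finset.card_erase_of_mem hx]; omega
    obtain ⟨c, hc, d, hd, e, he, hcd, hce, hde⟩ := Finset.two_lt_card.mp this
    simp only [Finset.mem_erase] at hc hd he
    have main : ∀ c d e, c ∈ N → d ∈ N → e ∈ N → c ≠ x → c ≠ y → d ≠ x → d ≠ y → e ≠ x → e ≠ y →
        c ≠ d → c ≠ e → H.Adj d e → False := by
      intro c d e hc hd he cx cy dx dy ex ey cd ce hde
      have hxn : ∀ z ∈ N, z ≠ x → z ≠ y → H.Adj x z := fun z hz zx zy =>
        P x hx y hy z hz hxy zx.symm zy.symm hnxy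
      have hyn : ∀ z ∈ N, z ≠ x → z ≠ y → H.Adj y z := fun z hz zx zy =>
        P y hy x hx z hz hxy.symm zy.symm zx.symm fun h => hnxy h.symm
      have vc := (hm c).mp hc
      have lift : ∀ a b, H.Adj a b → a ≠ c → b ≠ c → (auxContract H x c).Adj a b :=
        fun a b hab ha hb => ⟨ha, hb, hab.ne, Or.inl hab⟩
      refine auxDrw_K5 (h.contract (hxn c hc cx cy)) v x y d e
        (lift _ _ ((hm _).mp hx) vc.ne cx.symm) (lift _ _ ((hm _).mp hy) vc.ne cy.symm)
        (lift _ _ ((hm _).mp hd) vc.ne cd.symm) (lift _ _ ((hm _).mp he) vc.ne ce.symm)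
        ⟨cx.symm, cy.symm, hxy, Or.inr (Or.inl ⟨rfl, (hyn c hc cx cy).symm⟩)⟩
        (lift _ _ (hxn d hd dx dy) cx.symm cd.symm) (lift _ _ (hxn e he ex ey) cx.symm ce.symm)
        (lift _ _ (hyn d hd dx dy) cy.symm cd.symm) (lift _ _ (hyn e he ex ey) cy.symm ce.symm)
        (lift _ _ hde cd.symm ce.symm)
    by_cases hcd' : H.Adj c d
    · exact main e c d he.2.2 hc.2.2 hd.2.2 he.2.1 he.1 hc.2.1 hc.1 hd.2.1 hd.1 hce.symm hde.symm hcd'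
    · have := P c hc.2.2 d hd.2.2 e he.2.2 hcd hce hde hcd'
      exact main d c e hd.2.2 hc.2.2 he.2.2 hd.2.1 hd.1 hc.2.1 hc.1 he.2.1 he.1 hcd.symm hde this

open scoped Classical in
theorem aux_count {V : Type} [Fintype V] (H : SimpleGraph V) {u v : V} (huv : H.Adj u v) :
    H.edgeFinset.card ≤ (auxContract H u v).edgeFinset.card + 1 +
      (H.neighborFinset v ∩ H.neighborFinset u).card := by
  have e1 := H.card_edgeFinset_deleteIncidenceSet v
  let T := H.neighborFinset v \ insert u (H.neighborFinset u)
  have hT : H.degree v ≤ T.card + 1 + (H.neighborFinset v ∩ H.neighborFinset u).card := by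
    have : H.neighborFinset v ⊆ (T ∪ {u}) ∪ (H.neighborFinset v ∩ H.neighborFinset u) := by
      intro x hx
      simp only [T, Finset.mem_union, Finset.mem_sdiff, Finset.mem_insert, Finset.mem_inter,
        Finset.mem_singleton]
      tauto
    have h2 := Finset.card_le_card this
    have h3 := Finset.card_union_le (T ∪ {u}) (H.neighborFinset v ∩ H.neighborFinset u)
    have h4 := Finset.card_union_le T {u}
    rw [Finset.card_singleton] at h4
    rw [SimpleGraph.card_neighborFinset_eq_degree] at h2
    omega
  have hsub : (H.deleteIncidenceSet v).edgeFinset ∪ T.image (fun w => s(u, w)) ⊆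
      (auxContract H u v).edgeFinset := by
    intro e he
    rw [Finset.mem_union] at he
    rw [SimpleGraph.mem_edgeFinset]
    rcases he with he | he
    · rw [SimpleGraph.mem_edgeFinset] at he
      induction e with
      | h a b =>
        rw [SimpleGraph.mem_edgeSet, SimpleGraph.deleteIncidenceSet_adj] at he
        exact ⟨he.2.1, he.2.2, he.1.ne, Or.inl he.1⟩
    · obtain ⟨w, hw, rfl⟩ := Finset.mem_image.mp he
      simp only [T, Finset.mem_sdiff, Finset.mem_insert, SimpleGraph.mem_neighborFinset,
        not_or] at hw
      exact ⟨huv.ne, hw.1.ne', fun h => hw.2.1 h.symm, Or.inr (Or.inl ⟨rfl, hw.1⟩)⟩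
  have hdisj : Disjoint (H.deleteIncidenceSet v).edgeFinset (T.image (fun w => s(u, w))) := by
    rw [Finset.disjoint_right]
    intro e he
    obtain ⟨w, hw, rfl⟩ := Finset.mem_image.mp he
    simp only [T, Finset.mem_sdiff, Finset.mem_insert, SimpleGraph.mem_neighborFinset,
        not_or] at hw
    rw [SimpleGraph.mem_edgeFinset, SimpleGraph.mem_edgeSet, SimpleGraph.deleteIncidenceSet_adj]
    exact fun h => hw.2.2 h.1
  have hinj : (T.image (fun w => s(u, w))).card = T.card := by
    apply Finset.card_image_of_injective
    intro a b hab
    grind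
  have := Finset.card_le_card hsub
  rw [Finset.card_union_of_disjoint hdisj, hinj] at this
  have e2 : (H.deleteIncidenceSet v).edgeFinset.card = H.edgeFinset.card - H.degree v := by
    convert e1
  omega

open scoped Classical in
theorem aux_mader {V : Type} [Fintype V] : ∀ (n : ℕ) (S : Finset V), S.card = n + 1 →
    ∀ H : SimpleGraph V, AuxDrw H → (∀ a b, H.Adj a b → a ∈ S) →
    H.edgeFinset.card ≤ 3 * n + 1 := by
  intro n
  induction n with
  | zero =>
    intro S hS H _ hH
    obtain ⟨x, rfl⟩ := Finset.card_eq_one.mp hS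
    have : H.edgeFinset = ∅ := by
      rw [Finset.eq_empty_iff_forall_notMem]
      intro e he
      rw [SimpleGraph.mem_edgeFinset] at he
      induction e with
      | h a b =>
        have h1 := hH _ _ he
        have h2 := hH _ _ (SimpleGraph.Adj.symm he)
        rw [Finset.mem_singleton] at h1 h2
        subst h1
        exact SimpleGraph.Adj.ne he h2.symm
    simp [this]
  | succ n ih =>
    intro S hS H' hD' hH'
    by_contra hlt
    have : 3 * n + 5 ≤ H'.edgeFinset.card := by omega
    obtain ⟨E, hE, hEc⟩ := Finset.exists_subset_card_eq this
    obtain ⟨H, hcard, hle⟩ : ∃ H : SimpleGraph V, H.edgeFinset.card = 3 * n + 5 ∧ H ≤ H' := by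
      refine ⟨SimpleGraph.fromEdgeSet (E : Set (Sym2 V)), ?_, ?_⟩
      · rw [← hEc]
        congr 1
        ext e
        simp only [SimpleGraph.edgeFinset, Set.mem_toFinset]
        rw [SimpleGraph.edgeSet_fromEdgeSet]
        constructor
        · intro h; exact h.1
        · intro h
          exact ⟨h, H'.not_isDiag_of_mem_edgeFinset (hE h)⟩
      · intro a b hab
        have := hE ((SimpleGraph.fromEdgeSet_adj _).mp hab).1
        rwa [SimpleGraph.mem_edgeFinset] at this
    have hD := hD'.mono hle
    have hH : ∀ a b, H.Adj a b → a ∈ S := fun a b h => hH' a b (hle h)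
    have hsum := H.sum_degrees_eq_twice_card_edges
    have hex : ∃ v ∈ S, H.degree v ≤ 5 := by
      by_contra hcon
      push Not at hcon
      have h1 : S.card * 6 ≤ ∑ v ∈ S, H.degree v := by
        rw [← smul_eq_mul]
        exact Finset.card_nsmul_le_sum _ _ _ fun x hx => hcon x hx
      have h2 : ∑ v ∈ S, H.degree v ≤ ∑ v, H.degree v :=
        Finset.sum_le_sum_of_subset (Finset.subset_univ _)
      omega
    obtain ⟨v, hv, hv5⟩ := hex
    have hSe : (S.erase v).card = n + 1 := by rw [Finset.card_erase_of_mem hv]; omega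
    refine aux_local hD v hv5 ?_ ?_
    · by_contra h0
      have h0' : H.degree v = 0 := by omega
      have := ih (S.erase v) hSe H hD (fun a b hab => Finset.mem_erase.mpr ⟨?_, hH a b hab⟩)
      · omega
      · rintro rfl
        have : 0 < H.degree a := (H.degree_pos_iff_exists_adj a).mpr ⟨b, hab⟩
        omega
    · intro u hu
      have h1 := aux_count H hu
      have h2 := ih (S.erase v) hSe _ (hD.contract hu) (by
        rintro a b ⟨ha, hb, hab, h⟩
        refine Finset.mem_erase.mpr ⟨ha, ?_⟩
        rcases h with h | ⟨rfl, h⟩ | ⟨rfl, h⟩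
        · exact hH _ _ h
        · exact hH _ _ hu
        · exact hH _ _ h.symm)
      omega

open scoped Classical in
theorem aux_planar {V : Type} [Fintype V] (G : SimpleGraph V) (hG : G.IsPlanar) : AuxDrw G := by
  obtain ⟨P⟩ := hG
  let e := Complex.equivRealProdCLM.symm
  refine ⟨fun v => e (P.vtx v), fun u v => if h : G.Adj u v then Set.image e (P.arc u v h) else ∅,
    e.injective.comp P.vtx_inj, ?_, ?_, ?_⟩
  · intro u v h
    obtain ⟨φ, hc, -, h0, h1, hr⟩ := P.arc_curve u v h
    simp only [h, dif_pos]
    refine ⟨⟨⟨fun t => e (φ t), e.continuous.comp hc⟩, congrArg e h0, congrArg e h1⟩, fun t => ?_⟩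
    exact ⟨φ t, hr ▸ Set.mem_range_self t, rfl⟩
  · intro u v w x h _ hu hv
    simp only [h, dif_pos]
    rintro ⟨z, hz, hze⟩
    rw [e.injective hze] at hz
    rcases P.arc_vtx u v h w hz with h | h
    · exact hu h
    · exact hv h
  · intro i j k l h h' ik il jk jl
    simp only [h, h', dif_pos]
    rw [Set.disjoint_image_iff e.injective, Set.disjoint_left]
    intro z hz hz'
    have := P.arc_disjoint i j h k l h' (by simp [ik, il]) ⟨hz, hz'⟩
    obtain ⟨h1, h2⟩ := this
    rcases h1 with h1 | h1 <;> rcases h2 with h2 | h2 <;>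
    · have := P.vtx_inj (h1.symm.trans h2)
      contradiction

theorem aux_density {V : Type} [Fintype V] [DecidableEq V] (G : SimpleGraph V)
    [DecidableRel G.Adj] (hG : G.IsPlanar) (s : Finset V) (hs : s.Nonempty) :
    pairCount G s ≤ 6 * s.card := by
  classical
  let H : SimpleGraph V :=
    { Adj := fun a b => a ∈ s ∧ b ∈ s ∧ G.Adj a b
      symm := ⟨fun a b h => ⟨h.2.1, h.1, h.2.2.symm⟩⟩
      loopless := ⟨fun a h => h.2.2.ne rfl⟩ }
  have hle : H ≤ G := fun a b h => h.2.2
  have hpos := hs.card_pos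
  have h1 := aux_mader (s.card - 1) s (by omega) H ((aux_planar G hG).mono hle)
    (fun a b h => h.1)
  have h2 := H.two_mul_card_edgeFinset
  have h3 : pairCount G s = 2 * H.edgeFinset.card := by
    rw [h2, pairCount]
  have h4 : H.edgeFinset.card ≤ 3 * (s.card - 1) + 1 := by convert h1
  omega

theorem aux_orient {V : Type} [Fintype V] [DecidableEq V] (G : SimpleGraph V)
    [DecidableRel G.Adj] (k : ℕ)
    (hd : ∀ s : Finset V, s.Nonempty → pairCount G s ≤ 2 * k * s.card) :
    ∃ r : V → V → Prop,
        (∀ u w, G.Adj u w ↔ (r u w ∨ r w u)) ∧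
        (∀ u w, r u w → ¬ r w u) ∧
        (∀ u, {w | r u w}.ncard ≤ k) := by
  classical
  let t : G.edgeSet → Finset (V × Fin k) := fun e => Finset.univ.filter fun x => x.1 ∈ e.1
  have hall : ∀ F : Finset G.edgeSet, F.card ≤ (F.biUnion t).card := by
    intro F
    let s : Finset V := Finset.univ.filter fun v => ∃ e ∈ F, v ∈ e.1
    have hb : F.biUnion t = s ×ˢ Finset.univ := by
      ext ⟨v, i⟩
      simp [t, s]
    rw [hb, Finset.card_product, Finset.card_univ, Fintype.card_fin]
    rcases F.eq_empty_or_nonempty with rfl | ⟨e, he⟩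
    · simp
    have hs : s.Nonempty := by
      obtain ⟨e, hee⟩ := e
      induction e with
      | h a b => exact ⟨a, by simp only [s, Finset.mem_filter, Finset.mem_univ, true_and]; exact ⟨_, he, by simp⟩⟩
    have h1 := hd s hs
    let H : SimpleGraph V :=
      { Adj := fun a b => a ∈ s ∧ b ∈ s ∧ G.Adj a b
        symm := ⟨fun a b h => ⟨h.2.1, h.1, h.2.2.symm⟩⟩
        loopless := ⟨fun a h => h.2.2.ne rfl⟩ }
    have h2 := H.two_mul_card_edgeFinset
    have h3 : pairCount G s = 2 * H.edgeFinset.card := by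
      rw [h2, pairCount]
    have h4 : F.card ≤ H.edgeFinset.card := by
      rw [← Finset.card_image_of_injective F Subtype.val_injective]
      apply Finset.card_le_card
      intro e he
      obtain ⟨⟨e, hee⟩, heF, rfl⟩ := Finset.mem_image.mp he
      rw [SimpleGraph.mem_edgeFinset]
      induction e with
      | h a b =>
        refine ⟨?_, ?_, hee⟩
        · simp only [s, Finset.mem_filter, Finset.mem_univ, true_and]; exact ⟨_, heF, by simp⟩
        · simp only [s, Finset.mem_filter, Finset.mem_univ, true_and]; exact ⟨_, heF, by simp⟩
    nlinarith
  obtain ⟨f, hf, hft⟩ := (Finset.all_card_le_biUnion_card_iff_exists_injective t).mp hall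
  have hft' : ∀ e, (f e).1 ∈ e.1 := fun e => by simpa [t] using hft e
  refine ⟨fun u w => ∃ h : G.Adj u w, (f ⟨s(u, w), h⟩).1 = u, ?_, ?_, ?_⟩
  · intro u w
    constructor
    · intro h
      have := hft' ⟨s(u, w), h⟩
      rcases Sym2.mem_iff.mp this with h1 | h1
      · exact Or.inl ⟨h, h1⟩
      · refine Or.inr ⟨h.symm, ?_⟩
        simp only [Sym2.eq_swap (a := w) (b := u)]
        exact h1
    · rintro (⟨h, -⟩ | ⟨h, -⟩)
      · exact h
      · exact h.symm
  · rintro u w ⟨h, h1⟩ ⟨h', h2⟩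
    simp only [Sym2.eq_swap (a := w) (b := u)] at h2
    exact h.ne (h1.symm.trans h2)
  · intro u
    have hsub : ∀ x : {w | ∃ h : G.Adj u w, (f ⟨s(u, w), h⟩).1 = u}, G.Adj u x.1 := fun x => x.2.1
    let g : {w | ∃ h : G.Adj u w, (f ⟨s(u, w), h⟩).1 = u} → Fin k :=
      fun x => (f ⟨s(u, x.1), hsub x⟩).2
    have hg : Function.Injective g := by
      intro x y hxy
      obtain ⟨hx, hx'⟩ := x.2
      obtain ⟨hy, hy'⟩ := y.2
      have : f ⟨s(u, x.1), hx⟩ = f ⟨s(u, y.1), hy⟩ := Prod.ext (hx'.trans hy'.symm) hxy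
      have := congrArg Subtype.val (hf this)
      simp only [Sym2.eq_iff] at this
      have := hx.ne
      apply Subtype.ext
      grind
    have := Nat.card_le_card_of_injective g hg
    rwa [Nat.card_eq_fintype_card (α := Fin k), Fintype.card_fin, Nat.card_coe_set_eq] at this

/-- Every finite graph admits an orientation with maximum out-degree at most
`⌈∇₀(G)⌉` (here `c ≥ ∇₀(G)` is any rational density bound, stated via doubled
edge counts); in particular every planar graph admits an orientation with
maximum out-degree at most 3. An orientation is a relation `r` choosing, for
each edge, exactly one of its two directions. -/
theorem stmt4 :
    (∀ (V : Type) [Fintype V] [DecidableEq V] (G : SimpleGraph V)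
        [DecidableRel G.Adj] (c : ℚ), 0 ≤ c →
      (∀ s : Finset V, s.Nonempty → (pairCount G s : ℚ) ≤ 2 * c * s.card) →
      ∃ r : V → V → Prop,
        (∀ u w, G.Adj u w ↔ (r u w ∨ r w u)) ∧
        (∀ u w, r u w → ¬ r w u) ∧
        (∀ u, {w | r u w}.ncard ≤ ⌈c⌉₊)) ∧
    (∀ (V : Type) [Fintype V] [DecidableEq V] (G : SimpleGraph V)
        [DecidableRel G.Adj], G.IsPlanar →
      ∃ r : V → V → Prop,
        (∀ u w, G.Adj u w ↔ (r u w ∨ r w u)) ∧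
        (∀ u w, r u w → ¬ r w u) ∧
        (∀ u, {w | r u w}.ncard ≤ 3)) := by
  constructor
  · intro V _ _ G _ c hc h
    refine aux_orient G ⌈c⌉₊ fun s hs => ?_
    have h1 := h s hs
    have h2 : c ≤ (⌈c⌉₊ : ℚ) := Nat.le_ceil c
    have h3 : (0 : ℚ) ≤ s.card := by positivity
    have : (pairCount G s : ℚ) ≤ 2 * (⌈c⌉₊ : ℚ) * s.card := by nlinarith
    exact_mod_cast this
  · intro V _ _ G _ hG
    exact aux_orient G 3 fun s hs => aux_density G hG s hs
end

section
/- Every finite triangle-free planar graph admits an orientation of its edges with maximum out-degree at most 2. -/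
section

open Set Metric Topology

/-- `f` has a continuous logarithm on `K`. -/
def HasLog (K : Set ℂ) (f : ℂ → ℂ) : Prop :=
  ∃ g : ℂ → ℂ, ContinuousOn g K ∧ ∀ z ∈ K, Complex.exp (g z) = f z

/-- every nonvanishing continuous function on `K` has a logarithm. -/
def LogProp (K : Set ℂ) : Prop :=
  ∀ f : ℂ → ℂ, ContinuousOn f K → (∀ z ∈ K, f z ≠ 0) → HasLog K f

lemma HasLog.mono {K L : Set ℂ} {f : ℂ → ℂ} (h : HasLog K f) (hL : L ⊆ K) : HasLog L f := by
  obtain ⟨g, hg, h⟩ := h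
  exact ⟨g, hg.mono hL, fun z hz => h z (hL hz)⟩

lemma HasLog.congr {K : Set ℂ} {f f' : ℂ → ℂ} (h : HasLog K f) (hL : ∀ z ∈ K, f z = f' z) :
    HasLog K f' := by
  obtain ⟨g, hg, h⟩ := h
  exact ⟨g, hg, fun z hz => (h z hz).trans (hL z hz)⟩

lemma lift_homotopy {X : Type*} [TopologicalSpace X] (H : unitInterval × X → ℂ)
    (hH : Continuous H) (h0 : ∀ x, H x ≠ 0) (g : X → ℂ) (hg : Continuous g)
    (hg0 : ∀ x, Complex.exp (g x) = H (0, x)) :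
    ∃ g' : X → ℂ, Continuous g' ∧ ∀ x, Complex.exp (g' x) = H (1, x) := by
  let H' : C(unitInterval × X, {z : ℂ // z ≠ 0}) := ⟨fun p => ⟨H p, h0 p⟩, by fun_prop⟩
  let F := Complex.isCoveringMap_exp.liftHomotopy H' ⟨g, hg⟩
    (fun a => Subtype.ext (hg0 a).symm)
  refine ⟨fun x => F (1, x), by fun_prop, fun x => ?_⟩
  have := congrFun (Complex.isCoveringMap_exp.liftHomotopy_lifts H' ⟨g, hg⟩
    (fun a => Subtype.ext (hg0 a).symm)) (1, x)
  exact congrArg Subtype.val this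

lemma hasLog_of_restrict {K : Set ℂ} {f : ℂ → ℂ} (g : K → ℂ) (hg : Continuous g)
    (h : ∀ z : K, Complex.exp (g z) = f z) : HasLog K f := by
  classical
  refine ⟨fun z => if hz : z ∈ K then g ⟨z, hz⟩ else 0, ?_, fun z hz => ?_⟩
  · rw [continuousOn_iff_continuous_domRestrict]
    convert hg using 1
    ext z
    simp
  · simp only [hz, dif_pos]
    exact h ⟨z, hz⟩

lemma hasLog_div {K : Set ℂ} {p q : ℂ} (h : JoinedIn Kᶜ p q) :
    HasLog K (fun z => (z - p) / (z - q)) := by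
  obtain ⟨γ, hγ⟩ := h.symm
  have hq : q ∉ K := h.target_mem
  obtain ⟨g, hg, hg1⟩ := lift_homotopy (X := K) (fun t => (t.2.1 - γ t.1) / (t.2.1 - q))
    (by
      refine Continuous.div (by fun_prop) (by fun_prop) ?_
      rintro ⟨t, z, hz⟩
      exact sub_ne_zero.2 (fun h => hq (h ▸ hz)))
    (by
      rintro ⟨t, z, hz⟩
      refine div_ne_zero (sub_ne_zero.2 ?_) (sub_ne_zero.2 (fun h => hq (h ▸ hz)))
      intro h
      exact hγ t (h ▸ hz))
    (fun _ => 0) continuous_const (by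
      rintro ⟨z, hz⟩
      have : z - q ≠ 0 := sub_ne_zero.2 (fun h => hq (h ▸ hz))
      simp [this])
  refine hasLog_of_restrict g hg fun z => ?_
  simpa using hg1 z

lemma logProp_arc (φ : unitInterval → ℂ) (hφ : Continuous φ) (hi : Function.Injective φ) :
    LogProp (range φ) := by
  intro f hf hf0
  have hfφ : Continuous (f ∘ φ) := hf.comp_continuous hφ (fun x => mem_range_self x)
  obtain ⟨g, hg, hg1⟩ := lift_homotopy (X := unitInterval)
    (fun t => f (φ (t.1 * t.2))) (hfφ.comp (by fun_prop))
    (fun x => hf0 _ (mem_range_self _)) (fun _ => Complex.log (f (φ 0))) continuous_const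
    (fun x => by simp [Complex.exp_log (hf0 _ (mem_range_self (0 : unitInterval)))])
  have he : IsClosedEmbedding φ := hφ.isClosedEmbedding hi
  refine hasLog_of_restrict (g ∘ he.isEmbedding.toHomeomorph.symm)
    (hg.comp (Homeomorph.continuous _)) fun z => ?_
  obtain ⟨x, rfl⟩ := he.isEmbedding.toHomeomorph.surjective z
  simp [hg1]

lemma hasLog_univ (f : ℂ → ℂ) (hf : Continuous f) (hf0 : ∀ z, f z ≠ 0) : HasLog univ f := by
  obtain ⟨g, hg, hg1⟩ := lift_homotopy (X := ℂ)
    (fun t => f ((t.1 : ℝ) * t.2)) (hf.comp (by fun_prop))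
    (fun x => hf0 _) (fun _ => Complex.log (f 0)) continuous_const
    (fun x => by simp [Complex.exp_log (hf0 _)])
  exact ⟨g, hg.continuousOn, fun z _ => by simpa using hg1 z⟩

/-- two logs differ by locally constant. -/
lemma const_of_exp {X : Type*} [TopologicalSpace X] [PreconnectedSpace X] (u : X → ℂ)
    (hu : Continuous u) (h : ∀ x, Complex.exp (u x) = 1) (x y : X) : u x = u y := by
  choose n hn using fun x => Complex.exp_eq_one_iff.1 (h x)
  have hpi : (2 * Real.pi * Complex.I : ℂ) ≠ 0 := Complex.two_pi_I_ne_zero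
  have hn' : Continuous n := by
    have h1 : Continuous (fun x => (u x / (2 * Real.pi * Complex.I)).re) := by
      exact Complex.continuous_re.comp (hu.div_const _)
    have h2 : (fun x => (u x / (2 * Real.pi * Complex.I)).re) = fun x => ((n x : ℤ) : ℝ) := by
      ext x
      rw [hn x, mul_div_assoc, div_self hpi]
      simp
    rw [h2] at h1
    exact Int.isClosedEmbedding_coe_real.isEmbedding.continuous_iff.2 h1
  have : n x = n y := PreconnectedSpace.constant inferInstance hn'
  rw [hn x, hn y, this]

lemma not_hasLog_sphere (p : ℂ) {r : ℝ} (hr : 0 < r) {N : ℤ}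
    (h : HasLog (sphere p r) (fun z => (z - p) ^ N)) : N = 0 := by
  obtain ⟨g, hg, hg1⟩ := h
  have hmem : ∀ θ : ℝ, circleMap p r θ ∈ sphere p r := fun θ => circleMap_mem_sphere p hr.le θ
  have hr' : (r : ℂ) ≠ 0 := by exact_mod_cast hr.ne'
  let u : ℝ → ℂ := fun θ => g (circleMap p r θ) - N * (θ * Complex.I) - N * Complex.log r
  have hu : Continuous u := by
    have : Continuous fun θ : ℝ => g (circleMap p r θ) :=
      hg.comp_continuous (continuous_circleMap p r) hmem
    exact (this.sub (by fun_prop)).sub (by fun_prop)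
  have h1 : ∀ θ, Complex.exp (u θ) = 1 := by
    intro θ
    simp only [u]
    rw [Complex.exp_sub, Complex.exp_sub, hg1 _ (hmem θ), Complex.exp_int_mul,
      Complex.exp_int_mul, Complex.exp_log hr']
    simp only [circleMap, add_sub_cancel_left, mul_zpow]
    have h3 : (r : ℂ) ^ N ≠ 0 := zpow_ne_zero _ hr'
    have h4 : Complex.exp (θ * Complex.I) ^ N ≠ 0 := zpow_ne_zero _ (Complex.exp_ne_zero _)
    field_simp
  have h2 := const_of_exp u hu h1 0 (2 * Real.pi)
  have h3 : circleMap p r (2 * Real.pi) = circleMap p r 0 := by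
    simp [circleMap]
  simp only [u, h3] at h2
  have h4 : (N : ℂ) * (2 * Real.pi * Complex.I) = 0 := by
    push_cast at h2
    linear_combination h2
  rcases mul_eq_zero.1 h4 with h5 | h5
  · exact_mod_cast h5
  · exact absurd h5 Complex.two_pi_I_ne_zero

lemma hasLog_union {A B : Set ℂ} (hA : IsClosed A) (hB : IsClosed B) {f gA gB : ℂ → ℂ} {c : ℂ}
    (cA : ContinuousOn gA A) (cB : ContinuousOn gB B)
    (eA : ∀ z ∈ A, Complex.exp (gA z) = f z) (eB : ∀ z ∈ B, Complex.exp (gB z) = f z)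
    (hc : ∀ z ∈ A ∩ B, gA z - gB z = c) (hc1 : Complex.exp c = 1) : HasLog (A ∪ B) f := by
  classical
  let g : ℂ → ℂ := fun z => if z ∈ A then gA z else gB z + c
  have e1 : ∀ z ∈ A, g z = gA z := fun z hz => by simp [g, hz]
  have e2 : ∀ z ∈ B, g z = gB z + c := fun z hz => by
    by_cases h : z ∈ A
    · simp [g, h, ← hc z ⟨h, hz⟩]
    · simp [g, h]
  refine ⟨g, ?_, ?_⟩
  · refine ContinuousOn.union_of_isClosed (cA.congr e1) ?_ hA hB
    exact (cB.add continuousOn_const).congr e2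
  · rintro z (hz | hz)
    · rw [e1 z hz, eA z hz]
    · rw [e2 z hz, Complex.exp_add, eB z hz, hc1, mul_one]

lemma logProp_union {A B : Set ℂ} (hA : IsClosed A) (hB : IsClosed B) (h : (A ∩ B).Subsingleton)
    (lA : LogProp A) (lB : LogProp B) : LogProp (A ∪ B) := by
  intro f hf hf0
  obtain ⟨gA, cA, eA⟩ := lA f (hf.mono subset_union_left) (fun z hz => hf0 z (Or.inl hz))
  obtain ⟨gB, cB, eB⟩ := lB f (hf.mono subset_union_right) (fun z hz => hf0 z (Or.inr hz))
  rcases h.eq_empty_or_singleton with h | ⟨x, h⟩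
  · exact hasLog_union hA hB (c := 0) cA cB eA eB (by simp [h]) (by simp)
  · refine hasLog_union hA hB (c := gA x - gB x) cA cB eA eB (by simp [h]) ?_
    have hx : x ∈ A ∩ B := by simp [h]
    rw [Complex.exp_sub, eA x hx.1, eB x hx.2, div_self (hf0 x (Or.inl hx.1))]

lemma logProp_singleton (x : ℂ) : LogProp {x} := by
  intro f _ h0
  refine ⟨fun _ => Complex.log (f x), continuousOn_const, ?_⟩
  rintro z rfl
  exact Complex.exp_log (h0 _ rfl)

lemma logProp_union_finite {B : Set ℂ} (hB : IsClosed B) (lB : LogProp B) (s : Finset ℂ) :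
    LogProp (B ∪ s) := by
  classical
  induction s using Finset.induction_on with
  | empty => simpa using lB
  | insert x s hx ih =>
    have : B ∪ ((insert x s : Finset ℂ) : Set ℂ) = {x} ∪ (B ∪ s) := by
      ext z; simp
    rw [this]
    exact logProp_union isClosed_singleton (hB.union s.finite_toSet.isClosed)
      (subsingleton_singleton.anti inter_subset_left) (logProp_singleton x) ih

lemma joinedIn_far {R : ℝ} (hR : 0 < R) {x y : ℂ} (hx : R ≤ ‖x‖) (hy : R ≤ ‖y‖) :
    JoinedIn {z : ℂ | R ≤ ‖z‖} x y := by
  have key : ∀ x : ℂ, R ≤ ‖x‖ → JoinedIn {z : ℂ | R ≤ ‖z‖} x (((R / ‖x‖ : ℝ) : ℂ) * x) := by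
    intro x hx
    have hx0 : 0 < ‖x‖ := hR.trans_le hx
    refine JoinedIn.ofLine (f := fun t : ℝ => (((1 - t) + t * (R / ‖x‖) : ℝ) : ℂ) * x)
      (by fun_prop) (by simp) (by simp) ?_
    rintro _ ⟨t, ht, rfl⟩
    simp only [mem_ofPred_eq, norm_mul, Complex.norm_real, Real.norm_eq_abs]
    have h1 : 0 ≤ (1 - t) + t * (R / ‖x‖) := by
      have := ht.1; have := ht.2
      have : 0 ≤ R / ‖x‖ := by positivity
      nlinarith [mul_nonneg ht.1 this]
    rw [abs_of_nonneg h1, add_mul, mul_assoc, div_mul_cancel₀ _ hx0.ne']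
    nlinarith [ht.1, ht.2, mul_nonneg (sub_nonneg.2 ht.2) (sub_nonneg.2 hx)]
  have key2 : ∀ x : ℂ, R ≤ ‖x‖ → (((R / ‖x‖ : ℝ) : ℂ) * x) ∈ sphere (0 : ℂ) R := by
    intro x hx
    have hx0 : 0 < ‖x‖ := hR.trans_le hx
    simp only [mem_sphere_iff_norm, sub_zero, norm_mul, Complex.norm_real, Real.norm_eq_abs]
    rw [abs_of_nonneg (by positivity), div_mul_cancel₀ _ hx0.ne']
  have hs : IsPathConnected (sphere (0 : ℂ) R) :=
    isPathConnected_sphere (by simp) 0 hR.le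
  refine (key x hx).trans (JoinedIn.trans ?_ (key y hy).symm)
  refine (hs.joinedIn _ (key2 x hx) _ (key2 y hy)).mono ?_
  intro z hz
  simp at hz
  simp [hz]

/-- the face of `p` -/
def face (K : Set ℂ) (p : ℂ) : Set ℂ := {x | JoinedIn Kᶜ p x}

lemma joinedIn_nhds {U : Set ℂ} (hU : IsOpen U) {x : ℂ} (hx : x ∈ U) :
    ∃ r > 0, ∀ y ∈ ball x r, JoinedIn U x y := by
  obtain ⟨r, hr, h⟩ := Metric.isOpen_iff.1 hU x hx
  exact ⟨r, hr, fun y hy => ((isPathConnected_ball hr).joinedIn x (mem_ball_self hr) y hy).mono h⟩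

lemma isOpen_face {K : Set ℂ} (hK : IsClosed K) (p : ℂ) : IsOpen (face K p) := by
  rw [Metric.isOpen_iff]
  intro x hx
  obtain ⟨r, hr, h⟩ := joinedIn_nhds hK.isOpen_compl hx.target_mem
  exact ⟨r, hr, fun y hy => hx.trans (h y hy)⟩

lemma face_closure {K : Set ℂ} (hK : IsClosed K) {p x : ℂ} (h : x ∈ closure (face K p))
    (hx : x ∉ K) : x ∈ face K p := by
  obtain ⟨r, hr, h1⟩ := joinedIn_nhds hK.isOpen_compl (show x ∈ Kᶜ from hx)
  obtain ⟨y, hy, hd⟩ := Metric.mem_closure_iff.1 h r hr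
  exact JoinedIn.trans hy (h1 y (by rwa [mem_ball, dist_comm])).symm

lemma bounded_face {K : Set ℂ} (hK : IsCompact K) {p q : ℂ} 
    (h : ¬ JoinedIn Kᶜ p q) : Bornology.IsBounded (face K p) ∨ Bornology.IsBounded (face K q) := by
  obtain ⟨R, hR, hK'⟩ := hK.isBounded.subset_ball_lt 0 (0 : ℂ)
  have hf : {z : ℂ | R ≤ ‖z‖} ⊆ Kᶜ := by
    intro z hz hz'
    have := hK' hz'
    simp at this hz
    linarith
  by_contra! hcon
  have key : ∀ p, ¬ Bornology.IsBounded (face K p) → ∃ x, JoinedIn Kᶜ p x ∧ R ≤ ‖x‖ := by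
    intro p hp
    by_contra! hc
    refine hp ((Metric.isBounded_ball (x := (0 : ℂ)) (r := R)).subset ?_)
    intro x hx
    simpa using hc x hx
  obtain ⟨x, hx, hxR⟩ := key p hcon.1
  obtain ⟨y, hy, hyR⟩ := key q hcon.2
  exact h (hx.trans (((joinedIn_far hR hxR hyR).mono hf).trans hy.symm))

lemma eilenberg {K : Set ℂ} (hK : IsCompact K) {p : ℂ} (hp : p ∉ K)
    (hb : Bornology.IsBounded (face K p)) {h : ℂ → ℂ} (hc : ContinuousOn h (closure (face K p)))
    (h0 : ∀ z ∈ closure (face K p), h z ≠ 0) {N : ℤ}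
    (hl : HasLog K (fun z => (z - p) ^ N * h z)) : N = 0 := by
  classical
  obtain ⟨g, hg, hg1⟩ := hl
  obtain ⟨G, hG⟩ := ContinuousMap.exists_restrict_eq hK.isClosed
    ⟨K.domRestrict g, continuousOn_iff_continuous_domRestrict.1 hg⟩
  have hG' : ∀ z ∈ K, G z = g z := fun z hz => congrArg (fun F => F ⟨z, hz⟩) hG
  set U := face K p with hU
  have hUo : IsOpen U := isOpen_face hK.isClosed p
  have hpU : p ∈ U := JoinedIn.refl hp
  let H : ℂ → ℂ := fun z => if z ∈ U then Complex.exp (G z) / h z else (z - p) ^ N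
  have e1 : ∀ z ∈ Uᶜ, H z = (z - p) ^ N := fun z hz => by
    have : z ∉ U := hz
    simp [H, this]
  have e2 : ∀ z ∈ closure U, H z = Complex.exp (G z) / h z := fun z hz => by
    by_cases hzU : z ∈ U
    · simp [H, hzU]
    · have hzK : z ∈ K := by
        by_contra hzK
        exact hzU (face_closure hK.isClosed hz hzK)
      rw [e1 z hzU, hG' z hzK, hg1 z hzK, mul_div_cancel_right₀ _ (h0 z hz)]
  have hH : Continuous H := by
    have : closure U ∪ Uᶜ = univ := by
      rw [eq_univ_iff_forall]
      intro z
      by_cases hz : z ∈ U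
      · exact Or.inl (subset_closure hz)
      · exact Or.inr hz
    rw [← continuousOn_univ, ← this]
    refine ContinuousOn.union_of_isClosed ?_ ?_ isClosed_closure hUo.isClosed_compl
    · refine ContinuousOn.congr ?_ e2
      exact ContinuousOn.div (by fun_prop) hc h0
    · refine ContinuousOn.congr ?_ e1
      refine ContinuousOn.zpow₀ (by fun_prop) _ ?_
      intro z hz
      left
      exact sub_ne_zero.2 fun h => hz (h ▸ hpU)
  have hH0 : ∀ z, H z ≠ 0 := by
    intro z
    by_cases hz : z ∈ U
    · rw [e2 z (subset_closure hz)]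
      exact div_ne_zero (Complex.exp_ne_zero _) (h0 z (subset_closure hz))
    · rw [e1 z hz]
      exact zpow_ne_zero _ (sub_ne_zero.2 fun h => hz (h ▸ hpU))
  obtain ⟨R, hR, hR'⟩ := hb.subset_ball_lt 0 p
  refine not_hasLog_sphere p hR (((hasLog_univ H hH hH0).mono (subset_univ _)).congr ?_)
  intro z hz
  refine e1 z fun hzU => ?_
  have h1 := hR' hzU
  rw [mem_sphere] at hz
  rw [mem_ball] at h1
  linarith

lemma not_mem_closure_face {K : Set ℂ} (hK : IsClosed K) {p q : ℂ} (hq : q ∉ K)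
    (h : ¬ JoinedIn Kᶜ p q) : q ∉ closure (face K p) :=
  fun hc => h (face_closure hK hc hq)

lemma LogProp.joined {K : Set ℂ} (hK : IsCompact K) (hl : LogProp K) {p q : ℂ} (hp : p ∉ K)
    (hq : q ∉ K) : JoinedIn Kᶜ p q := by
  by_contra hn
  have key : ∀ p q, p ∉ K → q ∉ K → ¬ JoinedIn Kᶜ p q → ¬ Bornology.IsBounded (face K p) := by
    intro p q hp hq hn hb
    have := eilenberg hK hp hb (h := fun _ => 1) (N := 1) continuousOn_const (by simp)
      ((hl (fun z => z - p) (by fun_prop)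
        (fun z hz => sub_ne_zero.2 fun h => hp (h ▸ hz))).congr (by simp))
    simp at this
  rcases bounded_face hK hn with h | h
  · exact key p q hp hq hn h
  · exact key q p hq hp (fun h => hn h.symm) h

lemma log_diff {A B : Set ℂ} {a b : ℂ} (hAB : A ∩ B ⊆ {a, b}) {f gA gB : ℂ → ℂ}
    (h0 : ∀ z ∈ A ∩ B, f z ≠ 0)
    (eA : ∀ z ∈ A, Complex.exp (gA z) = f z) (eB : ∀ z ∈ B, Complex.exp (gB z) = f z) :
    ∃ (c k : ℤ), ∀ z ∈ A ∩ B,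
      gA z - gB z = c * (2 * Real.pi * Complex.I) +
        (k * (2 * Real.pi * Complex.I)) * (if z = a then 0 else 1) := by
  have hex : ∀ z, ∃ n : ℤ, z ∈ A ∩ B → gA z - gB z = n * (2 * Real.pi * Complex.I) := by
    intro z
    by_cases hz : z ∈ A ∩ B
    · have : Complex.exp (gA z - gB z) = 1 := by
        rw [Complex.exp_sub, eA z hz.1, eB z hz.2, div_self (h0 z hz)]
      obtain ⟨n, hn⟩ := Complex.exp_eq_one_iff.1 this
      exact ⟨n, fun _ => hn⟩
    · exact ⟨0, fun h => absurd h hz⟩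
  choose n hn using hex
  refine ⟨n a, n b - n a, fun z hz => ?_⟩
  rw [hn z hz]
  by_cases hza : z = a
  · simp [hza]
  · have hzb : z = b := by
      rcases hAB hz with h | h
      · exact absurd h hza
      · exact h
    subst hzb
    simp [hza]
    ring

lemma no_three {A B : Set ℂ} (hA : IsCompact A) (hB : IsCompact B) (lA : LogProp A) {a b : ℂ}
    (hAB : A ∩ B ⊆ {a, b}) {p q r : ℂ} (hp : p ∉ A ∪ B) (hq : q ∉ A ∪ B) (hr : r ∉ A ∪ B)
    (hpq : ¬ JoinedIn (A ∪ B)ᶜ p q) (hpr : ¬ JoinedIn (A ∪ B)ᶜ p r)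
    (hqr : ¬ JoinedIn (A ∪ B)ᶜ q r) (jpq : JoinedIn Bᶜ p q) (jpr : JoinedIn Bᶜ p r) : False := by
  have hK : IsCompact (A ∪ B) := hA.union hB
  have nz : ∀ {p}, p ∉ A ∪ B → ∀ z ∈ A ∪ B, z - p ≠ 0 := fun hp z hz =>
    sub_ne_zero.2 fun h => hp (h ▸ hz)
  obtain ⟨g1, cg1, eg1⟩ := hasLog_div jpq
  obtain ⟨g2, cg2, eg2⟩ := hasLog_div jpr
  obtain ⟨f1, cf1, ef1⟩ := lA (fun z => (z - p) / (z - q))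
    (ContinuousOn.div (by fun_prop) (by fun_prop) (fun z hz => nz hq z (Or.inl hz)))
    (fun z hz => div_ne_zero (nz hp z (Or.inl hz)) (nz hq z (Or.inl hz)))
  obtain ⟨f2, cf2, ef2⟩ := lA (fun z => (z - p) / (z - r))
    (ContinuousOn.div (by fun_prop) (by fun_prop) (fun z hz => nz hr z (Or.inl hz)))
    (fun z hz => div_ne_zero (nz hp z (Or.inl hz)) (nz hr z (Or.inl hz)))
  obtain ⟨c1, k1, h1⟩ := log_diff hAB
    (fun z hz => div_ne_zero (nz hp z (Or.inl hz.1)) (nz hq z (Or.inl hz.1))) ef1 eg1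
  obtain ⟨c2, k2, h2⟩ := log_diff hAB
    (fun z hz => div_ne_zero (nz hp z (Or.inl hz.1)) (nz hr z (Or.inl hz.1))) ef2 eg2
  obtain ⟨m1, m2, hm, hmk⟩ : ∃ m1 m2 : ℤ, ¬ (m1 = 0 ∧ m2 = 0) ∧ m1 * k1 + m2 * k2 = 0 := by
    by_cases h : k1 = 0 ∧ k2 = 0
    · exact ⟨1, 0, by simp, by simp [h.1]⟩
    · exact ⟨k2, -k1, fun h' => h ⟨by simpa using h'.2, h'.1⟩, by ring⟩
  have hmk' : (m1 : ℂ) * k1 + m2 * k2 = 0 := by exact_mod_cast hmk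
  have hlog : HasLog (A ∪ B)
      (fun z => ((z - p) / (z - q)) ^ m1 * ((z - p) / (z - r)) ^ m2) := by
    refine hasLog_union hA.isClosed hB.isClosed (gA := fun z => m1 * f1 z + m2 * f2 z)
      (gB := fun z => m1 * g1 z + m2 * g2 z)
      (c := ((m1 * c1 + m2 * c2 : ℤ) : ℂ) * (2 * Real.pi * Complex.I))
      (by fun_prop) (by fun_prop) ?_ ?_ ?_ ?_
    · intro z hz
      simp only [Complex.exp_add, Complex.exp_int_mul, ef1 z hz, ef2 z hz]
    · intro z hz
      simp only [Complex.exp_add, Complex.exp_int_mul, eg1 z hz, eg2 z hz]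
    · intro z hz
      have e1 := h1 z hz
      have e2 := h2 z hz
      push_cast
      linear_combination m1 * e1 + m2 * e2 +
        (2 * Real.pi * Complex.I) * (if z = a then 0 else 1) * hmk'
    · exact Complex.exp_int_mul_two_pi_mul_I _
  have main : ∀ p q r : ℂ, ∀ n m k : ℤ, p ∉ A ∪ B → q ∉ A ∪ B → r ∉ A ∪ B →
      ¬ JoinedIn (A ∪ B)ᶜ p q → ¬ JoinedIn (A ∪ B)ᶜ p r →
      HasLog (A ∪ B) (fun z => (z - p) ^ n * ((z - q) ^ m * (z - r) ^ k)) →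
      Bornology.IsBounded (face (A ∪ B) p) → n = 0 := by
    intro p q r n m k hp hq hr hpq hpr hl hb
    have nq : ∀ z ∈ closure (face (A ∪ B) p), z - q ≠ 0 := fun z hz =>
      sub_ne_zero.2 fun h => not_mem_closure_face hK.isClosed hq hpq (h ▸ hz)
    have nr : ∀ z ∈ closure (face (A ∪ B) p), z - r ≠ 0 := fun z hz =>
      sub_ne_zero.2 fun h => not_mem_closure_face hK.isClosed hr hpr (h ▸ hz)
    refine eilenberg hK hp hb ?_ ?_ hl
    · exact (ContinuousOn.zpow₀ (by fun_prop) _ fun z hz => Or.inl (nq z hz)).mul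
        (ContinuousOn.zpow₀ (by fun_prop) _ fun z hz => Or.inl (nr z hz))
    · intro z hz
      exact mul_ne_zero (zpow_ne_zero _ (nq z hz)) (zpow_ne_zero _ (nr z hz))
  have hform : ∀ z ∈ A ∪ B, ((z - p) / (z - q)) ^ m1 * ((z - p) / (z - r)) ^ m2 =
      (z - p) ^ (m1 + m2) * ((z - q) ^ (-m1) * (z - r) ^ (-m2)) := by
    intro z hz
    rw [zpow_add₀ (nz hp z hz), div_zpow, div_zpow, zpow_neg, zpow_neg]
    field_simp
  have hlog' := hlog.congr hform
  have Mp := main p q r _ _ _ hp hq hr hpq hpr hlog'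
  have Mq := main q p r (-m1) (m1 + m2) (-m2) hq hp hr (fun h => hpq h.symm) hqr
    (hlog'.congr fun z hz => by ring)
  have Mr := main r p q (-m2) (m1 + m2) (-m1) hr hp hq (fun h => hpr h.symm)
    (fun h => hqr h.symm) (hlog'.congr fun z hz => by ring)
  rcases bounded_face hK hpq with b1 | b1 <;> rcases bounded_face hK hpr with b2 | b2 <;>
    rcases bounded_face hK hqr with b3 | b3 <;> simp_all

lemma arc_interior (φ : unitInterval → ℂ) (hφ : Continuous φ) (hi : Function.Injective φ)
    {x : ℂ} {r : ℝ} (hr : 0 < r) : ¬ ball x r ⊆ range φ := by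
  intro hsub
  have he : IsClosedEmbedding φ := hφ.isClosedEmbedding hi
  have hinf : (φ ⁻¹' ball x r \ {0, 1}).Nonempty := by
    have h1 : (ball x r).Infinite := infinite_of_mem_nhds x (ball_mem_nhds x hr)
    have h2 : (φ ⁻¹' ball x r).Infinite := by
      intro hfin
      refine h1 ((hfin.image φ).subset ?_)
      intro z hz
      obtain ⟨t, rfl⟩ := hsub hz
      exact ⟨t, hz, rfl⟩
    exact (h2.sdiff (by simp)).nonempty
  obtain ⟨t, ht, ht01⟩ := hinf
  simp only [mem_insert_iff, mem_singleton_iff, not_or] at ht01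
  obtain ⟨s, hs, hs'⟩ := Metric.isOpen_iff.1 isOpen_ball _ ht
  have hs'' : ball (φ t) s ⊆ range φ := hs'.trans hsub
  have hconn : IsPreconnected (ball (φ t) s \ {φ t}) := by
    have : ball (φ t) s \ {φ t} = OpenPartialHomeomorph.univBall (φ t) s '' {0}ᶜ := by
      have hinj := (OpenPartialHomeomorph.univBall (φ t) s).injOn
      rw [OpenPartialHomeomorph.univBall_source, injOn_univ] at hinj
      rw [image_compl_eq_range_sdiff_image hinj, image_singleton,
        OpenPartialHomeomorph.univBall_apply_zero, ← image_univ,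
        ← OpenPartialHomeomorph.univBall_source (φ t) s,
        OpenPartialHomeomorph.image_source_eq_target, OpenPartialHomeomorph.univBall_target _ hs]
    rw [this]
    exact (isConnected_compl_singleton_of_one_lt_rank (by simp) 0).isPreconnected.image _
      (OpenPartialHomeomorph.continuous_univBall _ _).continuousOn
  have hpre : IsPreconnected (φ ⁻¹' (ball (φ t) s \ {φ t})) := by
    rw [← he.isInducing.isPreconnected_image, image_preimage_eq_of_subset]
    · exact hconn
    · exact sdiff_subset.trans hs''
  have hord := hpre.ordConnected
  have hopen : IsOpen (φ ⁻¹' ball (φ t) s) := isOpen_ball.preimage hφ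
  have htm : t ∈ φ ⁻¹' ball (φ t) s := mem_ball_self hs
  have h0 : (0 : unitInterval) < t := lt_of_le_of_ne t.2.1 (Ne.symm ht01.1)
  have h1 : t < 1 := lt_of_le_of_ne t.2.2 ht01.2
  obtain ⟨l, hl, hl'⟩ := exists_Ioc_subset_of_mem_nhds (hopen.mem_nhds htm) ⟨0, h0⟩
  obtain ⟨u, hu, hu'⟩ := exists_Ico_subset_of_mem_nhds (hopen.mem_nhds htm) ⟨1, h1⟩
  obtain ⟨a, ha⟩ := exists_between hl
  obtain ⟨b, hb⟩ := exists_between hu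
  have hma : a ∈ φ ⁻¹' (ball (φ t) s \ {φ t}) :=
    ⟨hl' ⟨ha.1, ha.2.le⟩, fun h => ha.2.ne (hi h)⟩
  have hmb : b ∈ φ ⁻¹' (ball (φ t) s \ {φ t}) :=
    ⟨hu' ⟨hb.1.le, hb.2⟩, fun h => hb.1.ne' (hi h)⟩
  exact (hord.out hma hmb ⟨ha.2.le, hb.1.le⟩).2 rfl

/-- points can be pushed off an arc. -/
lemma push_off (φ : unitInterval → ℂ) (hφ : Continuous φ) (hi : Function.Injective φ)
    {B : Set ℂ} (hB : IsClosed B) {p : ℂ} (hp : p ∉ B) :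
    ∃ w, w ∉ range φ ∪ B ∧ JoinedIn Bᶜ p w := by
  obtain ⟨r, hr, h⟩ := joinedIn_nhds hB.isOpen_compl (show p ∈ Bᶜ from hp)
  obtain ⟨w, hw, hw'⟩ := not_subset.1 (arc_interior φ hφ hi (x := p) hr)
  exact ⟨w, by simpa [hw'] using (h w hw).target_mem, h w hw⟩

lemma new_face (φ : unitInterval → ℂ) (hφ : Continuous φ) (hi : Function.Injective φ)
    {B : Set ℂ} (hB : IsClosed B) (hAB : range φ ∩ B ⊆ {φ 0, φ 1}) (hj : JoinedIn B (φ 0) (φ 1)) :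
    ∃ p q, p ∉ range φ ∪ B ∧ q ∉ range φ ∪ B ∧ JoinedIn Bᶜ p q ∧
      ¬ JoinedIn (range φ ∪ B)ᶜ p q := by
  classical
  by_contra! hcon
  set A := range φ with hA
  set a := φ 0
  set b := φ 1
  have hAc : IsClosed A := (isCompact_range hφ).isClosed
  have hab : a ≠ b := fun h => by simpa using hi h
  have hjA : JoinedIn A a b := ⟨⟨⟨φ, hφ⟩, rfl, rfl⟩, fun t => mem_range_self t⟩
  obtain ⟨gA, cA, eA⟩ := hasLog_div (K := Aᶜ) (by rwa [compl_compl])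
  obtain ⟨gB, cB, eB⟩ := hasLog_div (K := Bᶜ) (by rwa [compl_compl])
  have haA : a ∈ A := hjA.source_mem
  have hbA : b ∈ A := hjA.target_mem
  choose! w hw hw' using fun p (hp : p ∉ B) => push_off φ hφ hi hB hp
  have hconst : ∀ x y, x ∉ A ∪ B → y ∉ A ∪ B → JoinedIn Bᶜ x y →
      gA x - gB x = gA y - gB y := by
    intro x y hx hy hxy
    obtain ⟨γ, hγ⟩ := hcon x y hx hy hxy
    have cA' : Continuous fun t => gA (γ t) :=
      cA.comp_continuous γ.continuous fun t ht => hγ t (Or.inl ht)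
    have cB' : Continuous fun t => gB (γ t) :=
      cB.comp_continuous γ.continuous fun t ht => hγ t (Or.inr ht)
    have := const_of_exp (fun t => gA (γ t) - gB (γ t)) (cA'.sub cB') (fun t => by
      have h1 : γ t ∉ A := fun ht => hγ t (Or.inl ht)
      have h2 : γ t ∉ B := fun ht => hγ t (Or.inr ht)
      rw [Complex.exp_sub, eA _ h1, eB _ h2, div_self]
      refine div_ne_zero (sub_ne_zero.2 ?_) (sub_ne_zero.2 ?_)
      · intro h; exact h1 (h ▸ haA)
      · intro h; exact h1 (h ▸ hbA)) 0 1
    simpa using this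
  let g : ℂ → ℂ := fun z => if z ∈ A then gB z + (gA (w z) - gB (w z)) else gA z
  have e1 : ∀ z ∉ A, g z = gA z := fun z hz => by simp [g, hz]
  have e2 : ∀ z ∉ B, ∀ x ∉ A ∪ B, JoinedIn Bᶜ z x → g z = gB z + (gA x - gB x) := by
    intro z hz x hx hzx
    by_cases hzA : z ∈ A
    · simp only [g, hzA, if_true]
      rw [hconst (w z) x (hw z hz) hx ((hw' z hz).symm.trans hzx)]
    · rw [e1 z hzA, ← hconst z x (by simp [hz, hzA]) hx hzx]
      ring
  have hexp : ∀ z ∈ ({a, b} : Set ℂ)ᶜ, Complex.exp (g z) = (z - a) / (z - b) := by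
    intro z hz
    by_cases hzA : z ∈ A
    · have hzB : z ∉ B := fun h => hz (hAB ⟨hzA, h⟩)
      have h1 := hw z hzB
      have hwA : w z ∉ A := fun h => h1 (Or.inl h)
      have hwB : w z ∉ B := fun h => h1 (Or.inr h)
      rw [e2 z hzB (w z) h1 (hw' z hzB), Complex.exp_add, Complex.exp_sub, eB z hzB,
        eA _ hwA, eB _ hwB, div_self, mul_one]
      refine div_ne_zero (sub_ne_zero.2 ?_) (sub_ne_zero.2 ?_)
      · intro h; exact hwA (h ▸ haA)
      · intro h; exact hwA (h ▸ hbA)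
    · rw [e1 z hzA, eA z hzA]
  have hcont : ContinuousOn g ({a, b} : Set ℂ)ᶜ := by
    intro z hz
    refine ContinuousAt.continuousWithinAt ?_
    by_cases hzA : z ∈ A
    · have hzB : z ∉ B := fun h => hz (hAB ⟨hzA, h⟩)
      obtain ⟨r, hr, hball⟩ := joinedIn_nhds hB.isOpen_compl (show z ∈ Bᶜ from hzB)
      have hev : g =ᶠ[𝓝 z] fun y => gB y + (gA (w z) - gB (w z)) := by
        filter_upwards [ball_mem_nhds z hr] with y hy
        exact e2 y (hball y hy).target_mem (w z) (hw z hzB) ((hball y hy).symm.trans (hw' z hzB))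
      refine ContinuousAt.congr ?_ hev.symm
      exact (cB.continuousAt (hB.isOpen_compl.mem_nhds hzB)).add continuousAt_const
    · have hev : g =ᶠ[𝓝 z] gA := by
        filter_upwards [hAc.isOpen_compl.mem_nhds hzA] with y hy
        exact e1 y hy
      exact (cA.continuousAt (hAc.isOpen_compl.mem_nhds hzA)).congr hev.symm
  have hd : 0 < ‖a - b‖ := norm_pos_iff.2 (sub_ne_zero.2 hab)
  set r := ‖a - b‖ / 2 with hr
  have hrpos : 0 < r := by positivity
  obtain ⟨k, ck, ek⟩ : HasLog (sphere a r) (fun z => z - b) := by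
    have hsl : ∀ z ∈ sphere a r, (z - b) / (a - b) ∈ Complex.slitPlane := by
      intro z hz
      have hne := sub_ne_zero.2 hab
      have : (z - b) / (a - b) = 1 + (z - a) / (a - b) := by field_simp; ring
      rw [this]
      apply Complex.mem_slitPlane_of_norm_lt_one
      rw [norm_div, mem_sphere_iff_norm.1 hz, hr]
      field_simp
      norm_num
    refine ⟨fun z => Complex.log ((z - b) / (a - b)) + Complex.log (a - b), ?_, ?_⟩
    · exact (ContinuousOn.clog (by fun_prop) hsl).add continuousOn_const
    · intro z hz
      have hne := sub_ne_zero.2 hab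
      rw [Complex.exp_add, Complex.exp_log (Complex.slitPlane_ne_zero (hsl z hz)),
        Complex.exp_log hne, div_mul_cancel₀ _ hne]
  have hs : sphere a r ⊆ ({a, b} : Set ℂ)ᶜ := by
    rintro z hz (rfl | h)
    · simp at hz; linarith
    · have h' : z = b := h
      subst h'
      rw [mem_sphere_iff_norm, norm_sub_rev] at hz
      linarith
  have : HasLog (sphere a r) (fun z => (z - a) ^ (1 : ℤ)) := by
    refine ⟨fun z => g z + k z, (hcont.mono hs).add ck, fun z hz => ?_⟩
    rw [Complex.exp_add, hexp z (hs hz), ek z hz]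
    beta_reduce
    rw [zpow_one, div_mul_cancel₀]
    refine sub_ne_zero.2 fun h => hs hz (Or.inr h)
  exact absurd (not_hasLog_sphere a hrpos this) one_ne_zero

/-- a system of arcs in the complex plane -/
structure ArcSys {V : Type*} (E : Finset (Sym2 V)) (pt : V → ℂ) (A : Sym2 V → Set ℂ) : Prop where
  inj : Function.Injective pt
  arc : ∀ u v, s(u, v) ∈ E → ∃ φ : unitInterval → ℂ, Continuous φ ∧ Function.Injective φ ∧
    φ 0 = pt u ∧ φ 1 = pt v ∧ range φ = A s(u, v)
  vtx : ∀ e ∈ E, ∀ w, pt w ∈ A e → w ∈ e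
  disj : ∀ e ∈ E, ∀ e' ∈ E, e ≠ e' → ∀ z ∈ A e, z ∈ A e' → ∃ w, w ∈ e ∧ w ∈ e' ∧ z = pt w

/-- union of the arcs in `S` -/
def KS {V : Type*} (A : Sym2 V → Set ℂ) (S : Finset (Sym2 V)) : Set ℂ := ⋃ e ∈ S, A e

/-- at least `m` faces -/
def NF (K : Set ℂ) (m : ℕ) : Prop :=
  ∃ P : Finset ℂ, m ≤ P.card ∧ (∀ p ∈ P, p ∉ K) ∧
    ∀ p ∈ P, ∀ q ∈ P, p ≠ q → ¬ JoinedIn Kᶜ p q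

lemma NF.push {φ : unitInterval → ℂ} (hφ : Continuous φ) (hi : Function.Injective φ)
    {B : Set ℂ} (hB : IsClosed B) {m : ℕ} (h : NF B m) :
    ∃ P : Finset ℂ, m ≤ P.card ∧ (∀ p ∈ P, p ∉ range φ ∪ B) ∧
    ∀ p ∈ P, ∀ q ∈ P, p ≠ q → ¬ JoinedIn Bᶜ p q := by
  classical
  obtain ⟨P, hm, hP, hPP⟩ := h
  choose! w hw hw' using fun p (hp : p ∉ B) => push_off φ hφ hi hB hp
  have key : ∀ p ∈ P, ∀ q ∈ P, JoinedIn Bᶜ (w p) (w q) → p = q := by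
    intro p hp q hq hj
    by_contra hne
    exact hPP p hp q hq hne (((hw' p (hP p hp)).trans hj).trans (hw' q (hP q hq)).symm)
  refine ⟨P.image w, ?_, ?_, ?_⟩
  · rw [Finset.card_image_of_injOn]
    · exact hm
    · intro p hp q hq hpq
      refine key p hp q hq ?_
      rw [hpq]
      exact JoinedIn.refl (hw' q (hP q hq)).target_mem
  · intro p hp
    obtain ⟨x, hx, rfl⟩ := Finset.mem_image.1 hp
    exact hw x (hP x hx)
  · intro p hp q hq hne hj
    obtain ⟨x, hx, rfl⟩ := Finset.mem_image.1 hp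
    obtain ⟨y, hy, rfl⟩ := Finset.mem_image.1 hq
    exact hne (congrArg w (key x hx y hy hj))

lemma NF.mono_arc {φ : unitInterval → ℂ} (hφ : Continuous φ) (hi : Function.Injective φ)
    {B : Set ℂ} (hB : IsClosed B) {m : ℕ} (h : NF B m) : NF (range φ ∪ B) m := by
  obtain ⟨P, hm, hP, hPP⟩ := h.push hφ hi hB
  refine ⟨P, hm, hP, fun p hp q hq hne hj => hPP p hp q hq hne (hj.mono ?_)⟩
  exact compl_subset_compl.2 subset_union_right

lemma NF.succ_arc {φ : unitInterval → ℂ} (hφ : Continuous φ) (hi : Function.Injective φ)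
    {B : Set ℂ} (hB : IsClosed B) (hAB : range φ ∩ B ⊆ {φ 0, φ 1})
    (hj : JoinedIn B (φ 0) (φ 1)) {m : ℕ} (h : NF B m) : NF (range φ ∪ B) (m + 1) := by
  classical
  obtain ⟨P, hm, hP, hPP⟩ := h.push hφ hi hB
  obtain ⟨p, q, hp, hq, hpq, hnpq⟩ := new_face φ hφ hi hB hAB hj
  have hsub : (range φ ∪ B)ᶜ ⊆ Bᶜ := compl_subset_compl.2 subset_union_right
  let Q := P.filter (fun x => ¬ JoinedIn Bᶜ p x)
  have hQ : P.card ≤ Q.card + 1 := by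
    have h1 : (P.filter (fun x => JoinedIn Bᶜ p x)).card ≤ 1 := by
      rw [Finset.card_le_one]
      intro x hx y hy
      simp only [Finset.mem_filter] at hx hy
      by_contra hne
      exact hPP x hx.1 y hy.1 hne (hx.2.symm.trans hy.2)
    have h2 := Finset.card_filter_add_card_filter_not (s := P) (fun x => JoinedIn Bᶜ p x)
    simp only [Q]
    omega
  have hpq' : p ≠ q := by
    rintro rfl
    exact hnpq (JoinedIn.refl hp)
  have hpQ : p ∉ Q := by
    simp only [Q, Finset.mem_filter, not_and, not_not]
    intro _
    exact JoinedIn.refl hpq.source_mem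
  have hqQ : q ∉ Q := by
    simp only [Q, Finset.mem_filter, not_and, not_not]
    intro _
    exact hpq
  have hQx : ∀ x ∈ Q, x ∈ P ∧ ¬ JoinedIn Bᶜ p x := by
    intro x hx
    simpa [Q] using hx
  refine ⟨insert p (insert q Q), ?_, ?_, ?_⟩
  · rw [Finset.card_insert_of_notMem, Finset.card_insert_of_notMem hqQ]
    · omega
    · simp [hpq', hpQ]
  · intro x hx
    simp only [Finset.mem_insert] at hx
    rcases hx with rfl | rfl | hx
    · exact hp
    · exact hq
    · exact hP x (hQx x hx).1
  · intro x hx y hy hne hjj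
    simp only [Finset.mem_insert] at hx hy
    have hjB := hjj.mono hsub
    rcases hx with rfl | rfl | hx <;> rcases hy with rfl | rfl | hy
    · exact hne rfl
    · exact hnpq hjj
    · exact (hQx y hy).2 hjB
    · exact hnpq hjj.symm
    · exact hne rfl
    · exact (hQx y hy).2 (hpq.trans hjB)
    · exact (hQx x hx).2 hjB.symm
    · exact (hQx x hx).2 (hpq.trans hjB.symm)
    · exact hPP x (hQx x hx).1 y (hQx y hy).1 hne hjB

section
variable {V : Type*} {E : Finset (Sym2 V)} {pt : V → ℂ} {A : Sym2 V → Set ℂ}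

lemma ArcSys.isCompact (h : ArcSys E pt A) {e : Sym2 V} (he : e ∈ E) : IsCompact (A e) := by
  induction e using Sym2.ind with
  | _ u v =>
    obtain ⟨φ, hφ, -, -, -, hr⟩ := h.arc u v he
    rw [← hr]
    exact isCompact_range hφ

lemma ArcSys.logProp (h : ArcSys E pt A) {e : Sym2 V} (he : e ∈ E) : LogProp (A e) := by
  induction e using Sym2.ind with
  | _ u v =>
    obtain ⟨φ, hφ, hi, -, -, hr⟩ := h.arc u v he
    rw [← hr]
    exact logProp_arc φ hφ hi

lemma ArcSys.isCompact_KS (h : ArcSys E pt A) {S : Finset (Sym2 V)} (hS : S ⊆ E) :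
    IsCompact (KS A S) :=
  S.isCompact_biUnion fun _ he => h.isCompact (hS he)

lemma ArcSys.ne (h : ArcSys E pt A) {u v : V} (he : s(u, v) ∈ E) : u ≠ v := by
  rintro rfl
  obtain ⟨φ, hφ, hi, h0, h1, hr⟩ := h.arc u u he
  have := hi (h0.trans h1.symm)
  simp at this

lemma KS_insert [DecidableEq V] (e : Sym2 V) (S : Finset (Sym2 V)) :
    KS A (insert e S) = A e ∪ KS A S := by
  simp [KS]

lemma ArcSys.inter (h : ArcSys E pt A) {S : Finset (Sym2 V)} (hS : S ⊆ E) {e : Sym2 V}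
    (he : e ∈ E) (heS : e ∉ S) {z : ℂ} (hz : z ∈ A e) (hz' : z ∈ KS A S) :
    ∃ w, w ∈ e ∧ z = pt w ∧ ∃ e' ∈ S, w ∈ e' := by
  simp only [KS, mem_iUnion] at hz'
  obtain ⟨e', he', hz'⟩ := hz'
  obtain ⟨w, h1, h2, h3⟩ := h.disj e he e' (hS he') (fun h => heS (h ▸ he')) z hz hz'
  exact ⟨w, h1, h3, e', he', h2⟩

lemma ArcSys.joined (h : ArcSys E pt A) {S : Finset (Sym2 V)} (hS : S ⊆ E) {u v : V}
    (huv : Relation.EqvGen (fun x y => s(x, y) ∈ S) u v) :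
    u = v ∨ JoinedIn (KS A S) (pt u) (pt v) := by
  induction huv with
  | rel x y hxy =>
    right
    obtain ⟨φ, hφ, -, h0, h1, hr⟩ := h.arc x y (hS hxy)
    refine ⟨⟨⟨φ, hφ⟩, h0, h1⟩, fun t => ?_⟩
    simp only [KS, mem_iUnion]
    exact ⟨_, hxy, hr ▸ mem_range_self t⟩
  | refl x => exact Or.inl rfl
  | symm x y _ ih =>
    rcases ih with ih | ih
    · exact Or.inl ih.symm
    · exact Or.inr ih.symm
  | trans x y z _ _ ih1 ih2 =>
    rcases ih1 with rfl | ih1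
    · exact ih2
    · rcases ih2 with rfl | ih2
      · exact Or.inr ih1
      · exact Or.inr (ih1.trans ih2)

lemma ArcSys.euler [Fintype V] [DecidableEq V] (h : ArcSys E pt A) (S : Finset (Sym2 V))
    (hS : S ⊆ E) :
    ∃ (R : Finset V) (m : ℕ), NF (KS A S) m ∧ S.card + R.card + 1 ≤ m + Fintype.card V ∧
      ∀ v, ∃ r ∈ R, Relation.EqvGen (fun x y => s(x, y) ∈ S) v r := by
  induction S using Finset.induction_on with
  | empty =>
    refine ⟨Finset.univ, 1, ⟨{0}, by simp, by simp [KS], ?_⟩, by simp [Finset.card_univ, add_comm],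
      fun v => ⟨v, Finset.mem_univ _, Relation.EqvGen.refl _⟩⟩
    intro p hp q hq hne
    simp at hp hq
    exact absurd (hp.trans hq.symm) hne
  | insert e S he ih =>
    have hSE : S ⊆ E := fun x hx => hS (Finset.mem_insert_of_mem hx)
    have heE : e ∈ E := hS (Finset.mem_insert_self _ _)
    obtain ⟨R, m, hm, hc, hR⟩ := ih hSE
    have hmono : ∀ x y, Relation.EqvGen (fun x y => s(x, y) ∈ S) x y →
        Relation.EqvGen (fun x y => s(x, y) ∈ insert e S) x y := fun x y hxy =>
      hxy.mono (fun _ _ h => Finset.mem_insert_of_mem h)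
    rw [KS_insert, Finset.card_insert_of_notMem he]
    have hcl := (h.isCompact_KS hSE).isClosed
    induction e using Sym2.ind with
    | _ a b =>
    obtain ⟨φ, hφ, hi, h0, h1, hr⟩ := h.arc a b heE
    rw [← hr]
    by_cases hab : Relation.EqvGen (fun x y => s(x, y) ∈ S) a b
    · refine ⟨R, m + 1, hm.succ_arc hφ hi hcl ?_ ?_, by omega, fun v => ?_⟩
      · rintro z ⟨hz, hz'⟩
        obtain ⟨w, hw, rfl, -⟩ := h.inter hSE heE he (hr ▸ hz) hz'
        rw [h0, h1]
        rcases Sym2.mem_iff.1 hw with rfl | rfl <;> simp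
      · rw [h0, h1]
        exact (h.joined hSE hab).resolve_left (h.ne heE)
      · obtain ⟨r, hr, hvr⟩ := hR v
        exact ⟨r, hr, hmono _ _ hvr⟩
    · obtain ⟨r1, hr1, ha⟩ := hR a
      obtain ⟨r2, hr2, hb⟩ := hR b
      have hne : r1 ≠ r2 := by
        rintro rfl
        exact hab (ha.trans _ _ _ (hb.symm))
      refine ⟨R.erase r2, m, hm.mono_arc hφ hi hcl, ?_, fun v => ?_⟩
      · have := Finset.card_erase_add_one hr2
        omega
      · obtain ⟨r, hr, hvr⟩ := hR v
        by_cases hrr : r = r2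
        · subst hrr
          refine ⟨r1, Finset.mem_erase.2 ⟨hne, hr1⟩, ?_⟩
          refine (hmono _ _ hvr).trans _ _ _ ((hmono _ _ hb).symm.trans _ _ _ ?_)
          refine Relation.EqvGen.trans _ a _ (Relation.EqvGen.symm _ _ ?_) (hmono _ _ ha)
          exact Relation.EqvGen.rel _ _ (Finset.mem_insert_self _ _)
        · exact ⟨r, Finset.mem_erase.2 ⟨hrr, hr⟩, hmono _ _ hvr⟩

/-- vertices covered by `S` -/
noncomputable def vs [Fintype V] (S : Finset (Sym2 V)) : Finset V := by
  classical exact Finset.univ.filter (fun v => ∃ e ∈ S, v ∈ e)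

lemma mem_vs [Fintype V] {S : Finset (Sym2 V)} {v : V} : v ∈ vs S ↔ ∃ e ∈ S, v ∈ e := by
  simp [vs]

lemma ArcSys.euler' [Fintype V] (h : ArcSys E pt A) (S : Finset (Sym2 V))
    (hS : S ⊆ E) : ∃ m : ℕ, NF (KS A S) m ∧ S.card + 1 ≤ m + (vs S).card := by
  classical
  obtain ⟨R, m, hm, hc, hR⟩ := h.euler S hS
  refine ⟨m, hm, ?_⟩
  have hsub : (vs S)ᶜ ⊆ R := by
    intro v hv
    obtain ⟨r, hr, hvr⟩ := hR v
    have : ∀ x y, Relation.EqvGen (fun x y => s(x, y) ∈ S) x y → x = y ∨ (x ∈ vs S ∧ y ∈ vs S) := by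
      intro x y hxy
      induction hxy with
      | rel x y hxy =>
        right
        exact ⟨mem_vs.2 ⟨_, hxy, by simp⟩, mem_vs.2 ⟨_, hxy, by simp⟩⟩
      | refl x => exact Or.inl rfl
      | symm x y _ ih =>
        rcases ih with ih | ih
        · exact Or.inl ih.symm
        · exact Or.inr ih.symm
      | trans x y z _ _ ih1 ih2 =>
        rcases ih1 with rfl | ih1
        · exact ih2
        · rcases ih2 with rfl | ih2
          · exact Or.inr ih1
          · exact Or.inr ⟨ih1.1, ih2.2⟩
    rcases this v r hvr with rfl | h1
    · exact hr
    · exact absurd h1.1 (Finset.mem_compl.1 hv)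
  have h1 := Finset.card_le_card hsub
  have h2 := Finset.card_compl_add_card (vs S)
  omega

lemma exists_leaf [DecidableEq V] (hE : ∀ a b, s(a, b) ∈ E → a ≠ b)
    (htf : ∀ a b c, s(a, b) ∈ E → s(b, c) ∈ E → s(a, c) ∈ E → False)
    {D : Finset (Sym2 V)} (hD : D ⊆ E) (hc : D.card ≤ 3) (hne : D.Nonempty) :
    ∃ a b, s(a, b) ∈ D ∧ ∀ e ∈ D, e ≠ s(a, b) → b ∉ e := by
  by_contra! hcon
  obtain ⟨e, he⟩ := hne
  induction e using Sym2.ind with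
  | _ a b =>
  obtain ⟨e2, he2, hne2, hb⟩ := hcon a b he
  obtain ⟨e3, he3, hne3, ha⟩ := hcon b a (by rwa [Sym2.eq_swap])
  rw [Sym2.eq_swap] at hne3
  obtain ⟨c, rfl⟩ := Sym2.mem_iff_exists.1 hb
  obtain ⟨d, rfl⟩ := Sym2.mem_iff_exists.1 ha
  have hab := hE _ _ (hD he)
  have hbc := hE _ _ (hD he2)
  have had := hE _ _ (hD he3)
  have hca : c ≠ a := by
    rintro rfl
    exact hne2 Sym2.eq_swap
  have hdb : d ≠ b := by
    rintro rfl
    exact hne3 rfl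
  obtain ⟨e4, he4, hne4, hc4⟩ := hcon b c he2
  have h34 : s(a, d) ≠ s(b, c) := by
    intro h
    have : a ∈ s(b, c) := h ▸ Sym2.mem_mk_left _ _
    rcases Sym2.mem_iff.1 this with h | h
    · exact hab h
    · exact hca h.symm
  have h4 : e4 ≠ s(a, b) := by
    rintro rfl
    rcases Sym2.mem_iff.1 hc4 with h | h
    · exact hca h
    · exact hbc h.symm
  have : e4 = s(a, d) := by
    by_contra hne'
    have hsub : ({s(a, b), s(b, c), s(a, d), e4} : Finset (Sym2 V)) ⊆ D := by
      intro x hx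
      simp only [Finset.mem_insert, Finset.mem_singleton] at hx
      rcases hx with rfl | rfl | rfl | rfl <;> assumption
    have h5 := Finset.card_le_card hsub
    rw [Finset.card_insert_of_notMem, Finset.card_insert_of_notMem,
      Finset.card_insert_of_notMem, Finset.card_singleton] at h5
    · omega
    · simpa using fun h => hne' h.symm
    · simp only [Finset.mem_insert, Finset.mem_singleton, not_or]
      exact ⟨h34.symm, hne4.symm⟩
    · simp only [Finset.mem_insert, Finset.mem_singleton, not_or]
      exact ⟨hne2.symm, hne3.symm, h4.symm⟩
  subst this
  rcases Sym2.mem_iff.1 hc4 with h | h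
  · exact hca h
  · subst h
    exact htf a b c (hD he) (hD he2) (hD he3)

lemma ArcSys.logProp_small (h : ArcSys E pt A)
    (htf : ∀ a b c, s(a, b) ∈ E → s(b, c) ∈ E → s(a, c) ∈ E → False)
    (n : ℕ) : ∀ (D : Finset (Sym2 V)), D ⊆ E → D.card = n → n ≤ 3 → LogProp (KS A D) := by
  classical
  induction n with
  | zero =>
    intro D _ h0 _
    rw [Finset.card_eq_zero.1 h0]
    intro f _ _
    exact ⟨0, by simp [KS], by simp [KS]⟩
  | succ n ih =>
    intro D hD hn hn3
    obtain ⟨a, b, hab, hb⟩ := exists_leaf (fun a b => h.ne) htf hD (by omega)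
      (Finset.card_pos.1 (by omega))
    have hsub : D.erase s(a, b) ⊆ E := (Finset.erase_subset _ _).trans hD
    rw [← Finset.insert_erase hab, KS_insert]
    refine logProp_union (h.isCompact (hD hab)).isClosed (h.isCompact_KS hsub).isClosed ?_
      (h.logProp (hD hab)) (ih _ hsub (by rw [Finset.card_erase_of_mem hab]; omega) (by omega))
    have key : ∀ z ∈ A s(a, b) ∩ KS A (D.erase s(a, b)), z = pt a := by
      rintro z ⟨hz, hz'⟩
      obtain ⟨w, hw, rfl, e', he', hwe⟩ := h.inter hsub (hD hab) (Finset.notMem_erase _ _) hz hz'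
      rcases Sym2.mem_iff.1 hw with rfl | rfl
      · rfl
      · exact absurd hwe (hb e' (Finset.mem_of_mem_erase he') (Finset.ne_of_mem_erase he'))
    intro x hx y hy
    rw [key x hx, key y hy]

/-- incidence -/
def inc (A : Sym2 V → Set ℂ) (pt : V → ℂ) (S : Finset (Sym2 V)) (p : ℂ) (e : Sym2 V) : Prop :=
  ∃ x ∈ A e, x ∉ range pt ∧ x ∈ closure (face (KS A S) p)

/-- open arc -/
lemma ArcSys.open_arc (h : ArcSys E pt A) {e : Sym2 V} (he : e ∈ E) :
    IsPathConnected (A e \ range pt) := by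
  induction e using Sym2.ind with
  | _ u v =>
    obtain ⟨φ, hφ, hi, h0, h1, hr⟩ := h.arc u v he
    have : A s(u, v) \ range pt = φ '' Ioo 0 1 := by
      ext z
      constructor
      · rintro ⟨hz, hzp⟩
        rw [← hr] at hz
        obtain ⟨t, rfl⟩ := hz
        refine ⟨t, ⟨lt_of_le_of_ne t.2.1 ?_, lt_of_le_of_ne t.2.2 ?_⟩, rfl⟩
        · rintro rfl
          exact hzp ⟨u, h0.symm⟩
        · rintro rfl
          exact hzp ⟨v, h1.symm⟩
      · rintro ⟨t, ht, rfl⟩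
        refine ⟨hr ▸ mem_range_self t, ?_⟩
        rintro ⟨w, hw⟩
        have := h.vtx _ he w (by rw [hw, ← hr]; exact mem_range_self t)
        rcases Sym2.mem_iff.1 this with rfl | rfl
        · exact ht.1.ne (hi (h0.trans hw))
        · exact ht.2.ne' (hi (h1.trans hw))
    rw [this]
    refine IsPathConnected.image ?_ hφ
    have hI : IsPathConnected (Ioo (0 : ℝ) 1) :=
      (convex_Ioo 0 1).isPathConnected ⟨1 / 2, by norm_num⟩
    rw [IsInducing.subtypeVal.isPathConnected_iff] 
    convert hI using 1
    ext x
    constructor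
    · rintro ⟨t, ht, rfl⟩
      exact ⟨ht.1, ht.2⟩
    · intro hx
      exact ⟨⟨x, hx.1.le, hx.2.le⟩, ⟨hx.1, hx.2⟩, rfl⟩

lemma ArcSys.face_ge [Fintype V] (h : ArcSys E pt A)
    (htf : ∀ a b c, s(a, b) ∈ E → s(b, c) ∈ E → s(a, c) ∈ E → False)
    {S : Finset (Sym2 V)} (hS : S ⊆ E) (h4 : 4 ≤ S.card) {p : ℂ} (hp : p ∉ KS A S)
    (D : Finset (Sym2 V)) (hDS : D ⊆ S) (hD : ∀ e ∈ S, inc A pt S p e → e ∈ D) : 4 ≤ D.card := by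
  classical
  by_contra! hlt
  have hDE := hDS.trans hS
  have lp := h.logProp_small htf D.card D hDE rfl (by omega)
  have hDc := h.isCompact_KS hDE
  have hSc := (h.isCompact_KS hS).isClosed
  let X : Finset ℂ := Finset.univ.image pt
  have hX : (X : Set ℂ) = range pt := by simp [X]
  have lp' := logProp_union_finite hDc.isClosed lp X
  rw [hX] at lp'
  have hc : IsCompact (KS A D ∪ range pt) := hDc.union (finite_range pt).isCompact
  set W := (KS A D ∪ range pt)ᶜ with hW
  have hWpre : IsPreconnected W := by
    rcases W.eq_empty_or_nonempty with h0 | ⟨x, hx⟩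
    · rw [h0]; exact isPreconnected_empty
    · exact (show IsPathConnected W from
        ⟨x, hx, fun {y} hy => LogProp.joined hc lp' hx hy⟩).isConnected.isPreconnected
  have hUo := isOpen_face hSc p
  have hsubKS : KS A D ⊆ KS A S := by
    intro z hz
    simp only [KS, mem_iUnion] at hz ⊢
    obtain ⟨e, he, hz⟩ := hz
    exact ⟨e, hDS he, hz⟩
  have hWsub : W ⊆ face (KS A S) p := by
    refine hWpre.subset_of_closure_inter_subset hUo ?_ ?_
    · obtain ⟨r, hr, hb⟩ := Metric.isOpen_iff.1 hUo p (JoinedIn.refl hp)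
      have : (ball p r).Infinite := infinite_of_mem_nhds p (ball_mem_nhds p hr)
      obtain ⟨x, hx, hx'⟩ := (this.sdiff (finite_range pt)).nonempty
      refine ⟨x, ?_, hb hx⟩
      rintro (h1 | h1)
      · exact (hb hx).target_mem (hsubKS h1)
      · exact hx' h1
    · rintro x ⟨hx, hxW⟩
      refine face_closure hSc hx fun hxS => hxW (Or.inl ?_)
      simp only [KS, mem_iUnion] at hxS ⊢
      obtain ⟨e, he, hxe⟩ := hxS
      exact ⟨e, hD e he ⟨x, hxe, fun h => hxW (Or.inr h), hx⟩, hxe⟩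
  obtain ⟨e, heS, heD⟩ := Finset.exists_mem_notMem_of_card_lt_card (show D.card < S.card by omega)
  obtain ⟨x, hx, hxp⟩ := (h.open_arc (hS heS)).nonempty
  have hxW : x ∈ W := by
    rintro (h1 | h1)
    · obtain ⟨w, -, rfl, -⟩ := h.inter hDE (hS heS) heD hx h1
      exact hxp ⟨w, rfl⟩
    · exact hxp h1
  refine (hWsub hxW).target_mem ?_
  simp only [KS, mem_iUnion]
  exact ⟨e, heS, hx⟩

lemma ArcSys.edge_le (h : ArcSys E pt A) {S : Finset (Sym2 V)} (hS : S ⊆ E) {e : Sym2 V}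
    (he : e ∈ S) (P : Finset ℂ) (hP : ∀ p ∈ P, p ∉ KS A S ∧ inc A pt S p e)
    (hPP : ∀ p ∈ P, ∀ q ∈ P, p ≠ q → ¬ JoinedIn (KS A S)ᶜ p q) : P.card ≤ 2 := by
  classical
  by_contra! hlt
  obtain ⟨p, q, r, hp, hq, hr, hpq, hpr, hqr⟩ := Finset.two_lt_card_iff.1 hlt
  have hsub : S.erase e ⊆ E := (Finset.erase_subset _ _).trans hS
  have hBc := h.isCompact_KS hsub
  have hK : KS A S = A e ∪ KS A (S.erase e) := by
    rw [← KS_insert, Finset.insert_erase he]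
  have hsubc : (KS A S)ᶜ ⊆ (KS A (S.erase e))ᶜ := by
    rw [hK]
    exact compl_subset_compl.2 subset_union_right
  have hopen : A e \ range pt ⊆ (KS A (S.erase e))ᶜ := by
    rintro x ⟨hx, hxp⟩ hx'
    obtain ⟨w, -, rfl, -⟩ := h.inter hsub (hS he) (Finset.notMem_erase _ _) hx hx'
    exact hxp ⟨w, rfl⟩
  have hpath := h.open_arc (hS he)
  have key : ∀ p ∈ P, ∃ x ∈ A e \ range pt, JoinedIn (KS A (S.erase e))ᶜ p x := by
    intro p hp
    obtain ⟨x, hx, hxp, hxc⟩ := (hP p hp).2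
    refine ⟨x, ⟨hx, hxp⟩, ?_⟩
    obtain ⟨ρ, hρ, hb⟩ := joinedIn_nhds hBc.isClosed.isOpen_compl (hopen ⟨hx, hxp⟩)
    obtain ⟨y, hy, hd⟩ := Metric.mem_closure_iff.1 hxc ρ hρ
    exact (JoinedIn.mono hy hsubc).trans (hb y (by rwa [mem_ball, dist_comm])).symm
  have key2 : ∀ p ∈ P, ∀ q ∈ P, JoinedIn (KS A (S.erase e))ᶜ p q := by
    intro p hp q hq
    obtain ⟨x, hx, hpx⟩ := key p hp
    obtain ⟨y, hy, hqy⟩ := key q hq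
    exact hpx.trans (((hpath.joinedIn x hx y hy).mono hopen).trans hqy.symm)
  obtain ⟨a, b, hab⟩ : ∃ a b, A e ∩ KS A (S.erase e) ⊆ {a, b} := by
    induction e using Sym2.ind with
    | _ u v =>
    refine ⟨pt u, pt v, ?_⟩
    rintro z ⟨hz, hz'⟩
    obtain ⟨w, hw, rfl, -⟩ := h.inter hsub (hS he) (Finset.notMem_erase _ _) hz hz'
    rcases Sym2.mem_iff.1 hw with rfl | rfl <;> simp
  exact no_three (h.isCompact (hS he)) hBc (h.logProp (hS he)) hab
    (hK ▸ (hP p hp).1) (hK ▸ (hP q hq).1) (hK ▸ (hP r hr).1)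
    (hK ▸ hPP p hp q hq hpq) (hK ▸ hPP p hp r hr hpr) (hK ▸ hPP q hq r hr hqr)
    (key2 p hp q hq) (key2 p hp r hr)

lemma ArcSys.bound [Fintype V] (h : ArcSys E pt A)
    (htf : ∀ a b c, s(a, b) ∈ E → s(b, c) ∈ E → s(a, c) ∈ E → False)
    {S : Finset (Sym2 V)} (hS : S ⊆ E) : S.card ≤ 2 * (vs S).card := by
  classical
  by_cases h4 : 4 ≤ S.card
  · obtain ⟨m, ⟨P, hm, hP, hPP⟩, hc⟩ := h.euler' S hS
    have h1 : P.card * 4 ≤ S.card * 2 := by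
      refine Finset.card_mul_le_card_mul (fun p e => inc A pt S p e) ?_ ?_
      · intro p hp
        refine h.face_ge htf hS h4 (hP p hp) _ (Finset.filter_subset _ _) ?_
        intro e he hi
        exact Finset.mem_filter.2 ⟨he, hi⟩
      · intro e he
        refine h.edge_le hS he _ ?_ ?_
        · intro p hp
          have := Finset.mem_filter.1 hp
          exact ⟨hP p this.1, this.2⟩
        · intro p hp q hq
          exact hPP p (Finset.mem_filter.1 hp).1 q (Finset.mem_filter.1 hq).1
    omega
  · rcases S.eq_empty_or_nonempty with rfl | ⟨e, he⟩
    · simp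
    · induction e using Sym2.ind with
      | _ u v =>
      have : 1 < (vs S).card := Finset.one_lt_card.2
        ⟨u, mem_vs.2 ⟨_, he, by simp⟩, v, mem_vs.2 ⟨_, he, by simp⟩, h.ne (hS he)⟩
      omega

end

lemma ArcSys.hall {V : Type*} [Fintype V] {E : Finset (Sym2 V)} {pt : V → ℂ} {A : Sym2 V → Set ℂ}
    (h : ArcSys E pt A)
    (htf : ∀ a b c, s(a, b) ∈ E → s(b, c) ∈ E → s(a, c) ∈ E → False) :
    ∃ f : {e // e ∈ E} → V × Fin 2, Function.Injective f ∧ ∀ e, (f e).1 ∈ e.1 := by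
  classical
  have := (Finset.all_card_le_biUnion_card_iff_exists_injective
    (fun e : {e // e ∈ E} => (Finset.univ.filter (fun p : V × Fin 2 => p.1 ∈ e.1)))).1 ?_
  · obtain ⟨f, hf, hf2⟩ := this
    exact ⟨f, hf, fun e => by simpa using hf2 e⟩
  · intro s
    have h1 := h.bound htf (S := s.map (Function.Embedding.subtype _)) (by
      intro e he
      simp only [Finset.mem_map, Function.Embedding.subtype_apply] at he
      obtain ⟨a, _, rfl⟩ := he
      exact a.2)
    rw [Finset.card_map] at h1
    have h2 : (vs (s.map (Function.Embedding.subtype _))) ×ˢ (Finset.univ : Finset (Fin 2)) ⊆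
        s.biUnion (fun e : {e // e ∈ E} => (Finset.univ.filter (fun p : V × Fin 2 => p.1 ∈ e.1))) := by
      intro p hp
      rw [Finset.mem_product, mem_vs] at hp
      obtain ⟨⟨e, he, hpe⟩, _⟩ := hp
      simp only [Finset.mem_map, Function.Embedding.subtype_apply] at he
      obtain ⟨a, ha, rfl⟩ := he
      simp only [Finset.mem_biUnion, Finset.mem_filter, Finset.mem_univ, true_and]
      exact ⟨a, ha, hpe⟩
    have h3 := Finset.card_le_card h2
    rw [Finset.card_product, Finset.card_univ, Fintype.card_fin] at h3
    omega

lemma PlanarEmbedding.exists_arcSys {V : Type*} {G : SimpleGraph V} (P : PlanarEmbedding G)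
    (E : Finset (Sym2 V)) (hE : ∀ u v, s(u, v) ∈ E ↔ G.Adj u v) :
    ∃ (pt : V → ℂ) (A : Sym2 V → Set ℂ), ArcSys E pt A := by
  set c := Complex.equivRealProdCLM.symm with hc
  let A : Sym2 V → Set ℂ := fun e => {z | ∃ u v, ∃ h : G.Adj u v, s(u, v) = e ∧ ∃ x ∈ P.arc u v h, c x = z}
  have hA : ∀ u v (h : G.Adj u v), A s(u, v) = c '' P.arc u v h := by
    intro u v h
    ext z
    constructor
    · rintro ⟨u', v', h', he, x, hx, rfl⟩
      rcases Sym2.eq_iff.1 he with ⟨rfl, rfl⟩ | ⟨rfl, rfl⟩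
      · exact ⟨x, hx, rfl⟩
      · exact ⟨x, by rw [P.arc_symm]; exact hx, rfl⟩
    · rintro ⟨x, hx, rfl⟩
      exact ⟨u, v, h, rfl, x, hx, rfl⟩
  refine ⟨fun v => c (P.vtx v), A, ?_, ?_, ?_, ?_⟩
  · exact c.injective.comp P.vtx_inj
  · intro u v he
    have h := (hE u v).1 he
    obtain ⟨φ, h1, h2, h3, h4, h5⟩ := P.arc_curve u v h
    refine ⟨fun t => c (φ t), c.continuous.comp h1, c.injective.comp h2, congrArg c h3, congrArg c h4, ?_⟩
    rw [hA u v h, ← h5, ← range_comp]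
    rfl
  · intro e he w hw
    induction e using Sym2.ind with | _ u v =>
    have h := (hE u v).1 he
    rw [hA u v h] at hw
    obtain ⟨x, hx, hxw⟩ := hw
    have := c.injective hxw
    subst this
    exact Sym2.mem_iff.2 (P.arc_vtx u v h w hx)
  · intro e he e' he' hne z hz hz'
    induction e using Sym2.ind with | _ u v =>
    induction e' using Sym2.ind with | _ u' v' =>
    have h := (hE u v).1 he
    have h' := (hE u' v').1 he'
    rw [hA u v h] at hz
    rw [hA u' v' h'] at hz'
    obtain ⟨x, hx, rfl⟩ := hz
    obtain ⟨y, hy, hxy⟩ := hz'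
    have := c.injective hxy
    subst this
    obtain ⟨m1, m2⟩ := P.arc_disjoint u v h u' v' h' hne ⟨hx, hy⟩
    have n1 : ∃ w, w ∈ s(u, v) ∧ y = P.vtx w := by
      rcases m1 with m | m
      · exact ⟨u, by simp, m⟩
      · exact ⟨v, by simp, m⟩
    have n2 : ∃ w, w ∈ s(u', v') ∧ y = P.vtx w := by
      rcases m2 with m | m
      · exact ⟨u', by simp, m⟩
      · exact ⟨v', by simp, m⟩
    obtain ⟨w, hw, rfl⟩ := n1
    obtain ⟨w', hw', hh⟩ := n2
    have := P.vtx_inj hh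
    subst this
    exact ⟨w, hw, hw', rfl⟩

end

/-- Every finite triangle-free planar graph admits an orientation of its edges
with maximum out-degree at most 2. -/
theorem stmt5 {V : Type*} [Fintype V] (G : SimpleGraph V)
    (hG : G.IsPlanar) (htf : G.CliqueFree 3) :
    ∃ r : V → V → Prop,
      (∀ u w, G.Adj u w ↔ (r u w ∨ r w u)) ∧
      (∀ u w, r u w → ¬ r w u) ∧
      (∀ u, {w | r u w}.ncard ≤ 2) := by
  classical
  obtain ⟨P⟩ := hG
  have hE : ∀ u v, s(u, v) ∈ G.edgeFinset ↔ G.Adj u v := by simp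
  obtain ⟨pt, A, hs⟩ := P.exists_arcSys G.edgeFinset hE
  obtain ⟨f, hf, hf2⟩ := hs.hall (by
    intro a b c h1 h2 h3
    rw [hE] at h1 h2 h3
    exact htf {a, b, c} (SimpleGraph.is3Clique_triple_iff.2 ⟨h1, h3, h2⟩))
  refine ⟨fun u w => ∃ h : G.Adj u w, (f ⟨s(u, w), (hE u w).2 h⟩).1 = u, ?_, ?_, ?_⟩
  · intro u w
    constructor
    · intro h
      rcases Sym2.mem_iff.1 (hf2 ⟨s(u, w), (hE u w).2 h⟩) with h1 | h1
      · exact Or.inl ⟨h, h1⟩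
      · refine Or.inr ⟨h.symm, ?_⟩
        refine Eq.trans ?_ h1
        congr 3
        exact Sym2.eq_swap
    · rintro (⟨h, _⟩ | ⟨h, _⟩)
      · exact h
      · exact h.symm
  · rintro u w ⟨h, h1⟩ ⟨h', h2⟩
    apply h.ne
    rw [← h1]
    refine Eq.trans ?_ h2
    congr 3
    exact Sym2.eq_swap
  · intro u
    let g : V → Fin 2 := fun w => if h : G.Adj u w then (f ⟨s(u, w), (hE u w).2 h⟩).2 else 0
    have := Set.ncard_le_ncard_of_injOn (s := {w | ∃ h : G.Adj u w, (f ⟨s(u, w), (hE u w).2 h⟩).1 = u})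
      (t := (Set.univ : Set (Fin 2))) g (fun _ _ => Set.mem_univ _) (by
        rintro w ⟨h, h1⟩ w' ⟨h', h1'⟩ hg
        simp only [g, h, h', dif_pos] at hg
        have := hf (Prod.ext (h1.trans h1'.symm) hg)
        have := congrArg Subtype.val this
        exact Sym2.congr_right.1 this)
    simpa [Set.ncard_univ] using this
end
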